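/- arXiv:1802.05303 — 13 statements merged into one kernel-verified Lean document; each statement's English description precedes it below -/
import Mathlib

section
/- Assume there exists a set N ⊆ [0,1] of positive Lebesgue outer measure such that for every function g : N → ℕ^ℕ there exists h : ℕ → ℕ with g(x) ≤* h for all x ∈ N (i.e. non(N) < 𝔟). Then for every function Φ : [0,1] → ℕ^ℕ and every ε > 0 there exists a set A ⊆ [0,1] with m*(A) ≥ 1 − ε such that Φ[A] is bounded, i.e. there is h : ℕ → ℕ with Φ(x)(n) ≤ h(n) for every x ∈ A and every n ∈ ℕ. -/
open MeasureTheory Filter Set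

/-- A set of functions `ℕ → ℕ` is bounded if a single `h : ℕ → ℕ` dominates
all of its members everywhere. -/
def BddNatFun (S : Set (ℕ → ℕ)) : Prop :=
  ∃ h : ℕ → ℕ, ∀ f ∈ S, ∀ n, f n ≤ h n

open scoped Topology symmDiff

/-- If all rational translates of a set `H` of finite measure are almost disjoint from `C`, then so is
every real translate. -/
theorem measure_preimage_add_inter_eq_zero_of_rat {H C : Set ℝ} (hH : MeasurableSet H)
    (hfin : volume H ≠ ⊤) (hq : ∀ q : ℚ, volume (((q : ℝ) + ·) ⁻¹' H ∩ C) = 0) (t : ℝ) :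
    volume ((t + ·) ⁻¹' H ∩ C) = 0 := by
  let f : C(ℝ × ℝ, ℝ) := ⟨fun p => p.1 + p.2, by fun_prop⟩
  have hlim : Tendsto (fun s : ℝ => volume (((s + ·) ⁻¹' H) ∆ ((t + ·) ⁻¹' H))) (𝓝 t) (𝓝 0) :=
    tendsto_measure_symmDiff_preimage_nhds_zero (f := fun s => f.curry s) (g := f.curry t)
      f.curry.continuous.continuousAt
      (Eventually.of_forall fun s => measurePreserving_add_left volume s)
      (measurePreserving_add_left volume t) hH.nullMeasurableSet hfin
  refine nonpos_iff_eq_zero.1 (le_of_forall_gt_imp_ge_of_dense fun δ hδ => ?_)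
  have hev := hlim.eventually_lt_const hδ
  obtain ⟨_, ⟨q, rfl⟩, hs⟩ := (Rat.denseRange_cast (𝕜 := ℝ)).inter_nhds_nonempty hev
  calc volume ((t + ·) ⁻¹' H ∩ C)
      ≤ volume (((((q : ℝ) + ·) ⁻¹' H) ∆ ((t + ·) ⁻¹' H)) ∪ (((q : ℝ) + ·) ⁻¹' H ∩ C)) := by
        refine measure_mono fun x hx => ?_
        by_cases h : x ∈ ((q : ℝ) + ·) ⁻¹' H
        · exact Or.inr ⟨h, hx.2⟩
        · exact Or.inl (Or.inr ⟨hx.1, h⟩)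
    _ ≤ volume ((((q : ℝ) + ·) ⁻¹' H) ∆ ((t + ·) ⁻¹' H)) + volume (((q : ℝ) + ·) ⁻¹' H ∩ C) :=
        measure_union_le _ _
    _ ≤ δ := by rw [hq q, add_zero]; exact le_of_lt hs

/-- If every translate of `H` is almost disjoint from `C`, then one of the two sets is null. -/
theorem measure_eq_zero_of_forall_preimage_add_inter {H C : Set ℝ} (hH : MeasurableSet H)
    (hC : MeasurableSet C) (hpos : volume H ≠ 0)
    (h : ∀ t : ℝ, volume ((t + ·) ⁻¹' H ∩ C) = 0) : volume C = 0 := by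
  have hmeas : MeasurableSet {p : ℝ × ℝ | ¬(p.1 + p.2 ∈ H ∧ p.2 ∈ C)} :=
    ((measurable_fst.add measurable_snd hH).inter (measurable_snd hC)).compl
  have hae : ∀ᵐ t : ℝ, ∀ᵐ x : ℝ, ¬(t + x ∈ H ∧ x ∈ C) :=
    Eventually.of_forall fun t => measure_eq_zero_iff_ae_notMem.1 (h t)
  rw [Measure.ae_ae_comm hmeas] at hae
  refine measure_eq_zero_iff_ae_notMem.2 (hae.mono fun x hx hxC => hpos ?_)
  rw [← measure_preimage_add_right volume x H]
  exact measure_eq_zero_iff_ae_notMem.2 (hx.mono fun t ht htH => ht ⟨htH, hxC⟩)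

/-- A measurable set disjoint from all rational translates of a set of positive outer measure
is null. -/
theorem measure_eq_zero_of_disjoint_rat_translates {N C : Set ℝ} (hpos : volume N ≠ 0)
    (hfin : volume N ≠ ⊤) (hC : MeasurableSet C) (h : ∀ x ∈ N, ∀ q : ℚ, x + q ∉ C) :
    volume C = 0 := by
  have hH := measurableSet_toMeasurable volume N
  refine measure_eq_zero_of_forall_preimage_add_inter hH hC (by rwa [measure_toMeasurable])
    (measure_preimage_add_inter_eq_zero_of_rat hH (by rwa [measure_toMeasurable]) fun q => ?_)
  rw [← measure_preimage_add_right volume (-(q : ℝ))]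
  have hpre : (fun x : ℝ => x + -(q : ℝ)) ⁻¹' (((q : ℝ) + ·) ⁻¹' toMeasurable volume N ∩ C) =
      toMeasurable volume N ∩ (fun x : ℝ => x + -(q : ℝ)) ⁻¹' C := by
    ext x
    simp
  rw [hpre, Measure.measure_toMeasurable_inter (measurable_add_const _ hC) hfin]
  refine measure_mono_null (fun x hx => h x hx.1 (-q) ?_) measure_empty
  simpa using hx.2

/-- The rational translates of a set of positive outer measure have full outer measure in every
measurable set. -/
theorem measure_rat_translates_inter {N : Set ℝ} (hpos : volume N ≠ 0) (hfin : volume N ≠ ⊤)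
    {I : Set ℝ} (hI : MeasurableSet I) :
    volume ((⋃ q : ℚ, (· + (q : ℝ)) '' N) ∩ I) = volume I := by
  set M := ⋃ q : ℚ, (· + (q : ℝ)) '' N
  have hnull : volume (toMeasurable volume M)ᶜ = 0 :=
    measure_eq_zero_of_disjoint_rat_translates hpos hfin
      (measurableSet_toMeasurable _ _).compl fun x hx q hxq =>
        hxq (subset_toMeasurable _ _ (mem_iUnion.2 ⟨q, x, hx, rfl⟩))
  rw [← Measure.measure_toMeasurable_inter_of_sFinite hI, inter_comm]
  exact measure_inter_conull hnull

/-- If every family of functions indexed by `N` is dominated by a single function modulo finite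
sets, the same holds for families indexed by the union of the rational translates of `N`. -/
theorem exists_eventually_le_rat_translates {N : Set ℝ}
    (hN : ∀ g : ℝ → ℕ → ℕ, ∃ h : ℕ → ℕ, ∀ x ∈ N, ∀ᶠ n in atTop, g x n ≤ h n)
    (g : ℝ → ℕ → ℕ) :
    ∃ h : ℕ → ℕ, ∀ x ∈ ⋃ q : ℚ, (· + (q : ℝ)) '' N, ∀ᶠ n in atTop, g x n ≤ h n := by
  obtain ⟨e, he⟩ := exists_surjective_nat ℚ
  obtain ⟨h, hh⟩ := hN fun x n => (Finset.range (n + 1)).sup fun i => g (x + e i) n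
  refine ⟨h, fun y hy => ?_⟩
  obtain ⟨q, x, hx, rfl⟩ := mem_iUnion.1 hy
  obtain ⟨i, rfl⟩ := he q
  filter_upwards [hh x hx, eventually_ge_atTop i] with n hn hin
  exact (Finset.le_sup (f := fun i => g (x + e i) n)
    (Finset.mem_range.2 (Nat.lt_succ_of_le hin))).trans hn

/-- A function that is eventually below `h` is everywhere below a vertical shift of `h`. -/
theorem exists_forall_le_add_of_eventually_le {f h : ℕ → ℕ} (hf : ∀ᶠ n in atTop, f n ≤ h n) :
    ∃ k, ∀ n, f n ≤ h n + k := by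
  obtain ⟨m, hm⟩ := eventually_atTop.1 hf
  refine ⟨(Finset.range m).sup f, fun n => ?_⟩
  rcases le_or_gt m n with hn | hn
  · exact (hm n hn).trans (Nat.le_add_right _ _)
  · exact (Finset.le_sup (Finset.mem_range.2 hn)).trans (Nat.le_add_left _ _)

theorem stmt_0
    (hyp : ∃ N : Set ℝ, N ⊆ Set.Icc 0 1 ∧ 0 < volume N ∧
      ∀ g : ℝ → ℕ → ℕ, ∃ h : ℕ → ℕ, ∀ x ∈ N, ∀ᶠ n in atTop, g x n ≤ h n)
    (Φ : ℝ → ℕ → ℕ) (ε : ℝ) (hε : 0 < ε) :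
    ∃ A ⊆ Set.Icc (0 : ℝ) 1, ENNReal.ofReal (1 - ε) ≤ volume A ∧
      BddNatFun (Φ '' A) := by
  obtain ⟨N, hNI, hpos, hN⟩ := hyp
  have hfin : volume N ≠ ⊤ := measure_ne_top_of_subset hNI (by simp)
  obtain ⟨h, hh⟩ := exists_eventually_le_rat_translates hN Φ
  have hfull := measure_rat_translates_inter hpos.ne' hfin
    (measurableSet_Icc (a := (0 : ℝ)) (b := 1))
  set M := (⋃ q : ℚ, (· + (q : ℝ)) '' N) ∩ Icc (0 : ℝ) 1
  let A : ℕ → Set ℝ := fun k => {x ∈ M | ∀ n, Φ x n ≤ h n + k}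
  have hmono : Monotone A := fun k l hkl x hx =>
    ⟨hx.1, fun n => (hx.2 n).trans (Nat.add_le_add_left hkl _)⟩
  have hunion : ⋃ k, A k = M := by
    refine Subset.antisymm (iUnion_subset fun k x hx => hx.1) fun x hx => ?_
    obtain ⟨k, hk⟩ := exists_forall_le_add_of_eventually_le (hh x hx.1)
    exact mem_iUnion.2 ⟨k, hx, hk⟩
  have hlt : ENNReal.ofReal (1 - ε) < ⨆ k, volume (A k) := by
    rw [← hmono.measure_iUnion, hunion, hfull, Real.volume_Icc]
    exact (ENNReal.ofReal_lt_ofReal_iff (by norm_num)).2 (by linarith)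
  obtain ⟨k, hk⟩ := lt_iSup_iff.1 hlt
  refine ⟨A k, fun x hx => hx.1.2, hk.le, fun n => h n + k, ?_⟩
  rintro _ ⟨x, hx, rfl⟩ n
  exact hx.2 n
end

section
/- Let N ⊆ [0,1] be a set of positive Lebesgue outer measure, and let Y = { Int.fract(x + q) : x ∈ N, q ∈ ℚ } be the set of fractional parts of rational translates of elements of N. Then the Lebesgue outer measure of Y equals 1. -/
open MeasureTheory Set

/-- Zero-one law for outer measure: a set of positive outer measure that is invariant under
translation by a countable dense subgroup has full outer measure. -/
theorem measure_eq_univ_of_add_mem_of_dense {G : Type*} [AddGroup G] [TopologicalSpace G]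
    [IsTopologicalAddGroup G] [SecondCountableTopology G] [MeasurableSpace G] [BorelSpace G]
    (μ : Measure G) [IsFiniteMeasure μ] [μ.InnerRegular] [μ.IsAddLeftInvariant]
    (D : AddSubgroup G) [Countable D] (hD : Dense (D : Set G)) {Z : Set G}
    (hZ : ∀ d ∈ D, ∀ z ∈ Z, d + z ∈ Z) (hpos : μ Z ≠ 0) : μ Z = μ univ := by
  set S : Set G := ⋂ d : D, (fun z => (d : G) + z) ⁻¹' toMeasurable μ Z
  have hZS : Z ⊆ S := subset_iInter fun d z hz => subset_toMeasurable μ Z (hZ d d.2 z hz)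
  have hSZ : S ⊆ toMeasurable μ Z := fun z hz => by simpa using mem_iInter.1 hz 0
  have hSm : MeasurableSet S := .iInter fun d =>
    measurable_const_add (d : G) (measurableSet_toMeasurable μ Z)
  have hSD : ∀ d ∈ D, ∀ z ∈ S, d + z ∈ S := fun d hd z hz => mem_iInter.2 fun e => by
    simpa [add_assoc] using mem_iInter.1 hz (e + ⟨d, hd⟩)
  have hconst : Filter.EventuallyConst S (ae μ) := by
    refine aeconst_of_dense_setOfPred_preimage_vadd_eq (M := G) hSm.nullMeasurableSet
      (hD.mono fun d hd => ?_)
    ext z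
    refine ⟨fun hz => ?_, fun hz => hSD d hd z hz⟩
    simpa using hSD (-d) (D.neg_mem hd) (d + z) hz
  refine le_antisymm (measure_mono (subset_univ _)) ?_
  rcases Filter.eventuallyConst_set'.1 hconst with h | h
  · exact absurd (measure_mono_null hZS (ae_eq_empty.1 h)) hpos
  · calc μ univ = μ S := (measure_congr h).symm
      _ ≤ μ (toMeasurable μ Z) := measure_mono hSZ
      _ = μ Z := measure_toMeasurable Z

/-- The measure of an arbitrary subset of the circle, computed in a fundamental interval. -/
theorem AddCircle.volume_eq_volume_preimage_inter_Ioc (T : ℝ) [Fact (0 < T)] (a : ℝ)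
    (W : Set (AddCircle T)) :
    volume W = volume (((↑) : ℝ → AddCircle T) ⁻¹' W ∩ Ioc a (a + T)) := by
  have h : MeasurePreserving (AddCircle.measurableEquivIoc T a) volume
      (Measure.comap Subtype.val volume) := AddCircle.measurePreserving_equivIoc T
  have hW : AddCircle.measurableEquivIoc T a ⁻¹'
      (Subtype.val ⁻¹' (((↑) : ℝ → AddCircle T) ⁻¹' W)) = W := by
    ext w
    change ((AddCircle.equivIoc T a w : ℝ) : AddCircle T) ∈ W ↔ w ∈ W
    rw [AddCircle.coe_equivIoc]
  rw [← hW, h.measure_preimage_equiv,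
    (MeasurableEmbedding.subtype_coe measurableSet_Ioc).comap_apply,
    Subtype.image_preimage_coe, inter_comm, hW]

theorem stmt_1 (N : Set ℝ) (hN : N ⊆ Set.Icc 0 1) (hpos : 0 < volume N) :
    volume {y : ℝ | ∃ x ∈ N, ∃ q : ℚ, y = Int.fract (x + (q : ℝ))} = 1 := by
  set Y : Set ℝ := {y : ℝ | ∃ x ∈ N, ∃ q : ℚ, y = Int.fract (x + (q : ℝ))}
  let ρ : ℚ →+ UnitAddCircle :=
    (QuotientAddGroup.mk' (AddSubgroup.zmultiples (1 : ℝ))).comp (Rat.castHom ℝ).toAddMonoidHom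
  have hD : Dense (ρ.range : Set UnitAddCircle) :=
    (QuotientAddGroup.mk'_surjective (AddSubgroup.zmultiples (1 : ℝ))).denseRange.comp
      (Rat.denseRange_cast (𝕜 := ℝ)) (AddCircle.continuous_mk' 1)
  have : Countable ρ.range := (countable_range ρ).to_subtype
  let Z : Set UnitAddCircle := {c | ∃ x ∈ N, ∃ q : ℚ, c = ((x + q : ℝ) : UnitAddCircle)}
  have hZ : ∀ d ∈ ρ.range, ∀ z ∈ Z, d + z ∈ Z := by
    rintro _ ⟨r, rfl⟩ _ ⟨x, hx, q, rfl⟩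
    refine ⟨x, hx, r + q, ?_⟩
    change ((r : ℝ) : UnitAddCircle) + ((x + q : ℝ) : UnitAddCircle) = _
    rw [← AddCircle.coe_add]
    push_cast
    ring_nf
  have hvol := AddCircle.volume_eq_volume_preimage_inter_Ioc 1 0 Z
  rw [zero_add] at hvol
  have hZpos : volume Z ≠ 0 := by
    rw [hvol]
    intro h
    have hN0 : N ⊆ (((↑) : ℝ → UnitAddCircle) ⁻¹' Z ∩ Ioc 0 1) ∪ {0} := fun x hx => by
      rcases (hN hx).1.eq_or_lt with h0 | h0
      · exact .inr h0.symm
      · exact .inl ⟨⟨x, hx, 0, by simp⟩, h0, (hN hx).2⟩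
    exact hpos.ne' (measure_mono_null hN0 (measure_union_null h (by simp)))
  have hfull : volume Z = 1 :=
    (measure_eq_univ_of_add_mem_of_dense volume ρ.range hD hZ hZpos).trans (by simp)
  have hZY : ((↑) : ℝ → UnitAddCircle) ⁻¹' Z ∩ Ioc 0 1 ⊆ Y ∪ {1} := by
    rintro y ⟨⟨x, hx, q, h⟩, hy0, hy1⟩
    rcases hy1.eq_or_lt with h1 | h1
    · exact .inr h1
    · obtain ⟨n, hn⟩ := AddSubgroup.mem_zmultiples_iff.1 (QuotientAddGroup.eq.1 h)
      refine .inl ⟨x, hx, q, (Int.fract_eq_iff.2 ⟨hy0.le, h1, n, ?_⟩).symm⟩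
      simp only [zsmul_eq_mul, mul_one] at hn
      linarith
  have hY : Y ⊆ Ico 0 1 := by
    rintro _ ⟨x, -, q, rfl⟩
    exact ⟨Int.fract_nonneg _, Int.fract_lt_one _⟩
  refine le_antisymm ((measure_mono hY).trans (by simp)) ?_
  calc (1 : ENNReal) = volume (((↑) : ℝ → UnitAddCircle) ⁻¹' Z ∩ Ioc 0 1) := hfull ▸ hvol
    _ ≤ volume (Y ∪ {1}) := measure_mono hZY
    _ ≤ volume Y + volume {(1 : ℝ)} := measure_union_le _ _
    _ = volume Y := by simp
end

section
/- Assume that every subset of ℝ of cardinality less than the continuum is Lebesgue-null (i.e. non(N) = 𝔠), and that there exists a set Z ⊆ ℕ^ℕ of cardinality continuum such that every meagre subset of Z has cardinality less than the continuum (a 𝔠-Lusin set). Let 𝒮 be a set of sequences F = ⟨f_n⟩_{n∈ℕ} of functions f_n : [0,1] → [0,1], let P be a predicate assigning to each F ∈ 𝒮 and each A ⊆ [0,1] a proposition P(F,A), and let o : 𝒮 → ([0,1] → ℕ^ℕ) be a function which is cofinal (for every φ : [0,1] → ℕ^ℕ there exists F ∈ 𝒮 with φ(x)(n) ≤ o(F)(x)(n)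 for all x ∈ [0,1] and n ∈ ℕ) and such that for every F ∈ 𝒮 and A ⊆ [0,1], if P(F,A) holds then {o(F)(x) : x ∈ A} is bounded in ℕ^ℕ. Then there exist F ∈ 𝒮 and ε > 0 such that for every A ⊆ [0,1] with m*(A) ≥ 1 − ε, P(F,A) fails. -/
open MeasureTheory Filter Set

/-- The set of functions `ℕ → ℕ` dominated everywhere by a fixed function is nowhere dense. -/
theorem isNowhereDense_setOf_forall_le (h : ℕ → ℕ) :
    IsNowhereDense {f : ℕ → ℕ | ∀ n, f n ≤ h n} := by
  have hclosed : IsClosed {f : ℕ → ℕ | ∀ n, f n ≤ h n} := isClosed_Iic (a := h)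
  rw [hclosed.isNowhereDense_iff, Set.eq_empty_iff_forall_notMem]
  intro f hf
  have htendsto : Tendsto (fun k => Function.update f k (h k + 1)) atTop (nhds f) := by
    refine tendsto_pi_nhds.2 fun n => tendsto_const_nhds.congr' ?_
    filter_upwards [eventually_gt_atTop n] with k hk
    rw [Function.update_of_ne hk.ne]
  obtain ⟨k, hk⟩ := (htendsto.eventually (mem_interior_iff_mem_nhds.1 hf)).exists
  have hle := hk k
  simp at hle

theorem BddNatFun.isMeagre {S : Set (ℕ → ℕ)} (hS : BddNatFun S) : IsMeagre S := by
  obtain ⟨h, hh⟩ := hS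
  exact (isNowhereDense_setOf_forall_le h).isMeagre.mono hh

theorem stmt_4
    (hnon : ∀ s : Set ℝ, Cardinal.mk s < Cardinal.continuum → volume s = 0)
    (hLusin : ∃ Z : Set (ℕ → ℕ), Cardinal.mk Z = Cardinal.continuum ∧
      ∀ M ⊆ Z, IsMeagre M → Cardinal.mk M < Cardinal.continuum)
    (𝒮 : Set (ℕ → ℝ → ℝ))
    (h𝒮 : ∀ F ∈ 𝒮, ∀ n : ℕ, ∀ x ∈ Set.Icc (0 : ℝ) 1, F n x ∈ Set.Icc (0 : ℝ) 1)
    (P : (ℕ → ℝ → ℝ) → Set ℝ → Prop)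
    (o : (ℕ → ℝ → ℝ) → ℝ → ℕ → ℕ)
    (hcof : ∀ φ : ℝ → ℕ → ℕ, ∃ F ∈ 𝒮, ∀ x ∈ Set.Icc (0 : ℝ) 1, ∀ n, φ x n ≤ o F x n)
    (ho : ∀ F ∈ 𝒮, ∀ A ⊆ Set.Icc (0 : ℝ) 1, P F A → BddNatFun (o F '' A)) :
    ∃ F ∈ 𝒮, ∃ ε : ℝ, 0 < ε ∧
      ∀ A ⊆ Set.Icc (0 : ℝ) 1, ENNReal.ofReal (1 - ε) ≤ volume A → ¬ P F A := by
  obtain ⟨Z, hZ, hZmeagre⟩ := hLusin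
  obtain ⟨e⟩ := Cardinal.eq.1 (Cardinal.mk_real.trans hZ.symm)
  obtain ⟨F, hF, hle⟩ := hcof fun x => e x
  refine ⟨F, hF, 1 / 2, by norm_num, fun A hA hvol hP => ?_⟩
  obtain ⟨h, hh⟩ := ho F hF A hA hP
  have hbdd : BddNatFun ((Subtype.val ∘ e) '' A) := by
    refine ⟨h, ?_⟩
    rintro _ ⟨x, hx, rfl⟩ n
    exact (hle x (hA hx) n).trans (hh _ (mem_image_of_mem _ hx) n)
  have hcard := hZmeagre _ (by rintro _ ⟨x, -, rfl⟩; exact (e x).2) hbdd.isMeagre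
  rw [Cardinal.mk_image_eq (Subtype.val_injective.comp e.injective)] at hcard
  rw [hnon A hcard] at hvol
  norm_num at hvol
end

section
/- Assume there exists a set N ⊆ [0,1] of positive Lebesgue outer measure such that for every function g : N → ℕ^ℕ there exists h : ℕ → ℕ with g(x) ≤* h for all x ∈ N (i.e. non(N) < 𝔟). Then for every sequence of functions f_n : [0,1] → [0,1] such that f_n(x) → 0 for every x ∈ [0,1], and every ε > 0, there exists A ⊆ [0,1] with m*(A) ≥ 1 − ε such that f_n converges to 0 uniformly on A. -/
open MeasureTheory Filter Set

/-- Two measurable sets of positive measure meet in a set of positive measure after a suitable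
rational translation. -/
theorem exists_rat_volume_preimage_add_inter_ne_zero {C B : Set ℝ} (hC : MeasurableSet C)
    (hB : MeasurableSet B) (hCtop : volume C ≠ ⊤) (hC0 : volume C ≠ 0) (hB0 : volume B ≠ 0) :
    ∃ q : ℚ, volume ((fun x : ℝ => x + q) ⁻¹' C ∩ B) ≠ 0 := by
  by_contra! hq
  have key : ∀ t : ℝ, volume ((fun x : ℝ => x + t) ⁻¹' C ∩ B) = 0 := by
    intro t
    let F : C(ℝ × ℝ, ℝ) := ⟨fun p => p.2 + p.1, by fun_prop⟩
    have hF : Continuous F.curry := F.curry.continuous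
    have h0 := tendsto_measure_symmDiff_preimage_nhds_zero (μ := volume) (ν := volume)
      (hF.tendsto t) (Eventually.of_forall fun a => measurePreserving_add_right volume a)
      (measurePreserving_add_right volume t) hC.nullMeasurableSet hCtop
    refine le_antisymm (ge_of_tendsto_of_frequently h0 ?_) zero_le
    have hfreq : ∃ᶠ a in nhds t, a ∈ range ((↑) : ℚ → ℝ) :=
      mem_closure_iff_frequently.1 (Rat.denseRange_cast t)
    refine hfreq.mono ?_
    rintro _ ⟨q, rfl⟩
    refine (measure_mono (t := (fun x : ℝ => x + q) ⁻¹' C ∩ B ∪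
      symmDiff (F.curry q ⁻¹' C) (F.curry t ⁻¹' C)) ?_).trans
      ((measure_union_le _ _).trans (by rw [hq q, zero_add]))
    rintro x ⟨hx, hxB⟩
    by_cases h : x + q ∈ C
    · exact Or.inl ⟨h, hxB⟩
    · exact Or.inr (Or.inr ⟨hx, h⟩)
  have hS : MeasurableSet {p : ℝ × ℝ | ¬(p.2 + p.1 ∈ C ∧ p.2 ∈ B)} :=
    (((measurable_snd.add measurable_fst) hC).inter (measurable_snd hB)).compl
  have h1 : ∀ᵐ t : ℝ, ∀ᵐ x : ℝ, ¬(x + t ∈ C ∧ x ∈ B) := Eventually.of_forall fun t => by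
    rw [ae_iff]; simpa [Set.preimage, Set.inter_def] using key t
  have h2 : ∀ᵐ x : ℝ, ∀ᵐ t : ℝ, ¬(x + t ∈ C ∧ x ∈ B) :=
    (Measure.ae_ae_comm (p := fun t x => ¬(x + t ∈ C ∧ x ∈ B)) hS).1 h1
  refine hB0 (measure_mono_null ?_ (ae_iff.1 h2))
  intro x hx h
  rw [ae_iff] at h
  refine hC0 ?_
  rw [← measure_preimage_add volume x C]
  simp only [hx, and_true, not_not] at h
  exact h

/-- The union of all rational translates of a non-null subset of the line has full outer measure
in the unit interval. -/
theorem volume_iUnion_rat_translates_inter_Icc {N : Set ℝ} (hN : N ⊆ Icc 0 1)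
    (hN0 : volume N ≠ 0) :
    volume ({x : ℝ | ∃ q : ℚ, x + q ∈ N} ∩ Icc 0 1) = 1 := by
  set M : Set ℝ := {x : ℝ | ∃ q : ℚ, x + q ∈ N} ∩ Icc 0 1 with hM
  have hNtop : volume N ≠ ⊤ := measure_ne_top_of_subset hN (by simp)
  have hle : volume M ≤ 1 := (measure_mono inter_subset_right).trans (by simp)
  refine le_antisymm hle ?_
  have hcover : volume (Icc (0 : ℝ) 1) ≤
      volume (toMeasurable volume M) + volume (Icc (0 : ℝ) 1 \ toMeasurable volume M) :=
    (measure_mono (by intro x hx; by_cases h : x ∈ toMeasurable volume M <;> simp_all)).trans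
      (measure_union_le _ _)
  have hzero : volume (Icc (0 : ℝ) 1 \ toMeasurable volume M) = 0 := by
    by_contra hpos
    have hCm : MeasurableSet (Icc (0 : ℝ) 1 \ toMeasurable volume M) :=
      measurableSet_Icc.diff (measurableSet_toMeasurable _ _)
    obtain ⟨q, hq⟩ := exists_rat_volume_preimage_add_inter_ne_zero hCm
      (measurableSet_toMeasurable volume N)
      (measure_ne_top_of_subset sdiff_subset (by simp)) hpos (by rwa [measure_toMeasurable])
    rw [inter_comm, Measure.measure_toMeasurable_inter ((measurable_add_const _) hCm) hNtop] at hq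
    obtain ⟨x, hxN, hxI, hxM⟩ := nonempty_of_measure_ne_zero hq
    exact hxM (subset_toMeasurable _ _ ⟨⟨-q, by simpa using hxN⟩, hxI⟩)
  simpa [hzero, measure_toMeasurable] using hcover

/-- If every family of sequences indexed by `N` is eventually dominated by one sequence, then the
same holds for the union of the rational translates of `N`. -/
theorem exists_eventually_le_on_rat_translates {N : Set ℝ}
    (hN : ∀ g : ℝ → ℕ → ℕ, ∃ h : ℕ → ℕ, ∀ x ∈ N, ∀ᶠ n in atTop, g x n ≤ h n)
    (g : ℝ → ℕ → ℕ) :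
    ∃ h : ℕ → ℕ, ∀ x : ℝ, (∃ q : ℚ, x + q ∈ N) → ∀ᶠ n in atTop, g x n ≤ h n := by
  obtain ⟨r, hr⟩ := exists_surjective_nat ℚ
  obtain ⟨h, hh⟩ := hN fun y n => (Finset.range (n + 1)).sup fun i => g (y - r i) n
  refine ⟨h, ?_⟩
  rintro x ⟨q, hq⟩
  obtain ⟨i, rfl⟩ := hr q
  filter_upwards [hh _ hq, eventually_ge_atTop i] with n hn hin
  refine le_trans ?_ hn
  simpa using Finset.le_sup (f := fun j => g (x + r i - r j) n)
    (Finset.mem_range.2 (Nat.lt_succ_of_le hin))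

theorem stmt_5
    (hyp : ∃ N : Set ℝ, N ⊆ Set.Icc 0 1 ∧ 0 < volume N ∧
      ∀ g : ℝ → ℕ → ℕ, ∃ h : ℕ → ℕ, ∀ x ∈ N, ∀ᶠ n in atTop, g x n ≤ h n)
    (f : ℕ → ℝ → ℝ)
    (hmaps : ∀ n : ℕ, ∀ x ∈ Set.Icc (0 : ℝ) 1, f n x ∈ Set.Icc (0 : ℝ) 1)
    (hconv : ∀ x ∈ Set.Icc (0 : ℝ) 1, Tendsto (fun n => f n x) atTop (nhds 0))
    (ε : ℝ) (hε : 0 < ε) :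
    ∃ A ⊆ Set.Icc (0 : ℝ) 1, ENNReal.ofReal (1 - ε) ≤ volume A ∧
      ∀ δ : ℝ, 0 < δ → ∃ N : ℕ, ∀ n ≥ N, ∀ x ∈ A, f n x < δ := by
  obtain ⟨N, hNI, hN0, hN⟩ := hyp
  have hrate : ∀ x : ℝ, ∀ k : ℕ, ∃ m : ℕ, x ∈ Icc (0 : ℝ) 1 →
      ∀ n ≥ m, f n x < 1 / ((k : ℝ) + 1) := by
    intro x k
    by_cases hx : x ∈ Icc (0 : ℝ) 1
    · obtain ⟨m, hm⟩ := eventually_atTop.1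
        ((hconv x hx).eventually_lt_const (Nat.one_div_pos_of_nat (n := k)))
      exact ⟨m, fun _ => hm⟩
    · exact ⟨0, fun h => absurd h hx⟩
  choose g hg using hrate
  obtain ⟨h, hh⟩ := exists_eventually_le_on_rat_translates hN g
  let A : ℕ → Set ℝ := fun j =>
    {x | x ∈ {x : ℝ | ∃ q : ℚ, x + q ∈ N} ∩ Icc 0 1 ∧ ∀ k ≥ j, g x k ≤ h k}
  have hA : Monotone A := fun i j hij x hx => ⟨hx.1, fun k hk => hx.2 k (hij.trans hk)⟩
  have hAU : ⋃ j, A j = {x : ℝ | ∃ q : ℚ, x + q ∈ N} ∩ Icc 0 1 := by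
    refine Subset.antisymm (iUnion_subset fun j x hx => hx.1) fun x hx => ?_
    obtain ⟨j, hj⟩ := eventually_atTop.1 (hh x hx.1)
    exact mem_iUnion.2 ⟨j, hx, hj⟩
  have hlim := tendsto_measure_iUnion_atTop (μ := volume) hA
  rw [hAU, volume_iUnion_rat_translates_inter_Icc hNI hN0.ne'] at hlim
  have hlt : ENNReal.ofReal (1 - ε) < 1 := ENNReal.ofReal_lt_one.2 (by linarith)
  obtain ⟨j, hj⟩ := (hlim.eventually_const_lt hlt).exists
  refine ⟨A j, fun x hx => hx.1.2, hj.le, fun δ hδ => ?_⟩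
  obtain ⟨k, hk⟩ := exists_nat_one_div_lt hδ
  refine ⟨h (max j k), fun n hn x hx => ?_⟩
  calc f n x < 1 / (((max j k : ℕ) : ℝ) + 1) :=
        hg x (max j k) hx.1.2 n ((hx.2 _ (le_max_left j k)).trans hn)
    _ ≤ 1 / ((k : ℝ) + 1) := Nat.one_div_le_one_div (le_max_right j k)
    _ < δ := hk
end

section
/- Assume that every subset of ℝ of cardinality less than the continuum is Lebesgue-null (i.e. non(N) = 𝔠), and that there exists a set Z ⊆ ℕ^ℕ of cardinality continuum such that every meagre subset of Z has cardinality less than the continuum (a 𝔠-Lusin set). Then there exist a sequence of functions f_n : [0,1] → [0,1] with f_n(x) → 0 for every x ∈ [0,1], and ε > 0, such that for every A ⊆ [0,1] with m*(A) ≥ 1 − ε, the sequence f_n does not converge to 0 uniformly on A. -/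
open MeasureTheory Filter Set

/-- Pointwise bounded sets of Baire space are nowhere dense. -/
theorem isNowhereDense_Iic_baire (b : ℕ → ℕ) : IsNowhereDense (Set.Iic b) := by
  rw [isClosed_Iic.isNowhereDense_iff, Set.eq_empty_iff_forall_notMem]
  intro z hz
  have hlim : Tendsto (fun m => Function.update z m (b m + 1)) atTop (nhds z) := by
    refine tendsto_pi_nhds.2 fun k => tendsto_const_nhds.congr' ?_
    filter_upwards [eventually_gt_atTop k] with m hm
    rw [Function.update_of_ne hm.ne]
  obtain ⟨m, hm⟩ := (hlim.eventually (mem_interior_iff_mem_nhds.1 hz)).exists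
  have hle := hm m
  simp at hle

/-- The weighted measure of the set of coordinates at which `z` is at least `n`. -/
noncomputable def geometricTail (z : ℕ → ℕ) (n : ℕ) : ℝ :=
  ∑' k, if n ≤ z k then (1 / 2 : ℝ) / 2 ^ k else 0

theorem geometricTail_term_nonneg (z : ℕ → ℕ) (n k : ℕ) :
    0 ≤ if n ≤ z k then (1 / 2 : ℝ) / 2 ^ k else 0 := by
  split_ifs <;> positivity

theorem geometricTail_term_le (z : ℕ → ℕ) (n k : ℕ) :
    (if n ≤ z k then (1 / 2 : ℝ) / 2 ^ k else 0) ≤ 1 / 2 / 2 ^ k := by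
  split_ifs
  · exact le_rfl
  · positivity

theorem summable_geometricTail (z : ℕ → ℕ) (n : ℕ) :
    Summable fun k => if n ≤ z k then (1 / 2 : ℝ) / 2 ^ k else 0 :=
  (summable_geometric_two' 1).of_nonneg_of_le (geometricTail_term_nonneg z n)
    (geometricTail_term_le z n)

theorem geometricTail_mem_Icc (z : ℕ → ℕ) (n : ℕ) : geometricTail z n ∈ Set.Icc (0 : ℝ) 1 := by
  refine ⟨tsum_nonneg (geometricTail_term_nonneg z n), ?_⟩
  have hsum := hasSum_geometric_two' (1 : ℝ)
  exact hsum.tsum_eq ▸ (summable_geometricTail z n).tsum_le_tsum (geometricTail_term_le z n)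
    hsum.summable

theorem tendsto_geometricTail (z : ℕ → ℕ) : Tendsto (geometricTail z) atTop (nhds 0) := by
  have hlim : Tendsto (geometricTail z) atTop (nhds (∑' _ : ℕ, (0 : ℝ))) := by
    refine tendsto_tsum_of_dominated_convergence (summable_geometric_two' 1) (fun k => ?_)
      (Eventually.of_forall fun n k => ?_)
    · refine tendsto_const_nhds.congr' ?_
      filter_upwards [eventually_gt_atTop (z k)] with n hn
      rw [if_neg hn.not_ge]
    · rw [Real.norm_of_nonneg (geometricTail_term_nonneg z n k)]
      exact geometricTail_term_le z n k
  simpa using hlim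

theorem lt_of_geometricTail_lt {z : ℕ → ℕ} {n k : ℕ}
    (h : geometricTail z n < 1 / 2 / 2 ^ k) : z k < n := by
  by_contra! hle
  have hterm := (summable_geometricTail z n).le_tsum k
    fun j _ => geometricTail_term_nonneg z n j
  rw [if_pos hle] at hterm
  exact h.not_ge hterm

theorem stmt_6
    (hnon : ∀ s : Set ℝ, Cardinal.mk s < Cardinal.continuum → volume s = 0)
    (hLusin : ∃ Z : Set (ℕ → ℕ), Cardinal.mk Z = Cardinal.continuum ∧
      ∀ M ⊆ Z, IsMeagre M → Cardinal.mk M < Cardinal.continuum) :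
    ∃ f : ℕ → ℝ → ℝ,
      (∀ n : ℕ, ∀ x ∈ Set.Icc (0 : ℝ) 1, f n x ∈ Set.Icc (0 : ℝ) 1) ∧
      (∀ x ∈ Set.Icc (0 : ℝ) 1, Tendsto (fun n => f n x) atTop (nhds 0)) ∧
      ∃ ε : ℝ, 0 < ε ∧
        ∀ A ⊆ Set.Icc (0 : ℝ) 1, ENNReal.ofReal (1 - ε) ≤ volume A →
          ¬ (∀ δ : ℝ, 0 < δ → ∃ N : ℕ, ∀ n ≥ N, ∀ x ∈ A, f n x < δ) := by
  obtain ⟨Z, hZ, hmeagre⟩ := hLusin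
  obtain ⟨e⟩ := Cardinal.eq.1 (Cardinal.mk_real.trans hZ.symm)
  refine ⟨fun n x => geometricTail (e x) n, fun n x _ => geometricTail_mem_Icc _ n,
    fun x _ => tendsto_geometricTail _, 1 / 2, by norm_num, fun A _ hA hunif => ?_⟩
  choose b hb using fun k : ℕ => hunif (1 / 2 / 2 ^ k) (by positivity)
  have hinj : Function.Injective fun x => (e x : ℕ → ℕ) :=
    Subtype.val_injective.comp e.injective
  have hbound : (fun x => (e x : ℕ → ℕ)) '' A ⊆ Set.Iic b := by
    rintro _ ⟨x, hx, rfl⟩ k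
    exact (lt_of_geometricTail_lt (hb k (b k) le_rfl x hx)).le
  have hcard := hmeagre _ (by rintro _ ⟨x, _, rfl⟩; exact (e x).2)
    ((isNowhereDense_Iic_baire b).isMeagre.mono hbound)
  rw [Cardinal.mk_image_eq hinj] at hcard
  rw [hnon A hcard, nonpos_iff_eq_zero, ENNReal.ofReal_eq_zero] at hA
  norm_num at hA
end

section
/- Assume there exists a set N ⊆ [0,1] of positive Lebesgue outer measure such that for every function g : N → ℕ^ℕ there exists h : ℕ → ℕ with g(x) ≤* h for all x ∈ N (i.e. non(N) < 𝔟). Let φ be a lower semicontinuous submeasure on ℕ, let ε > 0, and let f_m : [0,1] → [0,1] be a sequence converging to 0 I-pointwise on [0,1], where I = Exh(φ). Then there exists A ⊆ [0,1] with m*(A) ≥ 1 − ε such that the sequence converges to 0 equi-ideally on A. -/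
open MeasureTheory Filter Set ENNReal

/-- A lower semicontinuous submeasure on `ℕ`. -/
def IsLSCSubmeasure (φ : Set ℕ → ℝ≥0∞) : Prop :=
  φ ∅ = 0 ∧ (∀ A B : Set ℕ, φ A ≤ φ (A ∪ B)) ∧
    (∀ A B : Set ℕ, φ (A ∪ B) ≤ φ A + φ B) ∧
    ∀ A : Set ℕ, Tendsto (fun n => φ (A ∩ Set.Iio n)) atTop (nhds (φ A))

/-- `f` converges to `0` `Exh(φ)`-pointwise on `A`. -/
def ExhPointwise (φ : Set ℕ → ℝ≥0∞) (f : ℕ → ℝ → ℝ) (A : Set ℝ) : Prop :=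
  ∀ δ : ℝ, 0 < δ → ∀ x ∈ A,
    ∃ k : ℕ, φ ({m | δ ≤ f m x} \ Set.Iio k) < ENNReal.ofReal δ

/-- `f` converges to `0` equi-ideally (w.r.t. `φ`) on `A`. -/
def ExhEqui (φ : Set ℕ → ℝ≥0∞) (f : ℕ → ℝ → ℝ) (A : Set ℝ) : Prop :=
  ∀ δ : ℝ, 0 < δ →
    ∃ k : ℕ, ∀ x ∈ A, φ ({m | δ ≤ f m x} \ Set.Iio k) < ENNReal.ofReal δ

/-- A set of reals of positive outer measure that is invariant under rational translations has
full outer measure in every measurable set. -/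
theorem volume_inter_eq_of_rat_invariant {M : Set ℝ} (hpos : volume M ≠ 0)
    (hinv : ∀ (q : ℚ) (x : ℝ), x + q ∈ M ↔ x ∈ M) {S : Set ℝ} (hS : MeasurableSet S) :
    volume (M ∩ S) = volume S := by
  set D : Set ℝ := (toMeasurable volume M)ᶜ
  have hDm : MeasurableSet D := (measurableSet_toMeasurable _ _).compl
  have hdisj : Disjoint M D := disjoint_compl_right.mono_left (subset_toMeasurable _ _)
  suffices hD0 : volume D = 0 by
    rw [← Measure.measure_toMeasurable_inter_of_sFinite hS M, inter_comm]
    exact measure_inter_conull hD0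
  by_contra hD0
  obtain ⟨x, -, hx⟩ := Measure.exists_mem_of_measure_ne_zero_of_ae hpos
    (IsUnifLocDoublingMeasure.ae_tendsto_measure_inter_div volume M 1)
  obtain ⟨y, -, hy⟩ := Measure.exists_mem_of_measure_ne_zero_of_ae hD0
    (IsUnifLocDoublingMeasure.ae_tendsto_measure_inter_div volume D 1)
  let δ : ℕ → ℝ := fun j => 1 / ((j : ℝ) + 1)
  have hδ0 : ∀ j, 0 < δ j := fun j => Nat.one_div_pos_of_nat
  have hδ : Tendsto δ atTop (nhdsWithin 0 (Ioi 0)) :=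
    tendsto_nhdsWithin_iff.mpr ⟨tendsto_one_div_add_atTop_nhds_zero_nat, .of_forall hδ0⟩
  have hq : ∀ j, ∃ q : ℚ, |y - x - q| < δ j := fun j => exists_rat_near _ (hδ0 j)
  choose q hq using hq
  have h₁ := hx (fun _ => x) δ hδ (.of_forall fun j => by simpa using (hδ0 j).le)
  have h₂ := hy (fun j => x + q j) δ hδ (.of_forall fun j => by
    rw [Metric.mem_closedBall, Real.dist_eq, one_mul, ← sub_sub]
    exact (hq j).le)
  have htranslate : ∀ j, volume (M ∩ Metric.closedBall x (δ j)) =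
      volume (M ∩ Metric.closedBall (x + q j) (δ j)) := fun j => by
    rw [← measure_preimage_add_right volume (q j : ℝ)
      (M ∩ Metric.closedBall (x + q j) (δ j))]
    congr 1
    ext z
    simp [hinv, Metric.mem_closedBall]
  have hle : ∀ j, volume (M ∩ Metric.closedBall x (δ j)) / volume (Metric.closedBall x (δ j)) +
      volume (D ∩ Metric.closedBall (x + q j) (δ j)) /
        volume (Metric.closedBall (x + q j) (δ j)) ≤ 1 := fun j => by
    have hvol : volume (Metric.closedBall x (δ j)) =
        volume (Metric.closedBall (x + q j) (δ j)) := by simp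
    rw [htranslate, hvol, ← ENNReal.add_div]
    refine ENNReal.div_le_of_le_mul ?_
    rw [one_mul, ← measure_union (hdisj.mono inter_subset_left inter_subset_left)
      (hDm.inter Metric.isClosed_closedBall.measurableSet)]
    exact measure_mono (union_subset inter_subset_right inter_subset_right)
  have := le_of_tendsto' (h₁.add h₂) hle
  norm_num at this

/-- Countably many functions `ℕ → ℕ` have a common eventual upper bound. -/
theorem exists_eventually_ge_of_countable {ι : Type*} [Nonempty ι] [Countable ι] (h : ι → ℕ → ℕ) :
    ∃ H : ℕ → ℕ, ∀ i, ∀ᶠ n in atTop, h i n ≤ H n := by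
  obtain ⟨u, hu⟩ := exists_surjective_nat ι
  refine ⟨fun n => ∑ m ∈ Finset.range (n + 1), h (u m) n, fun i => ?_⟩
  obtain ⟨m, rfl⟩ := hu i
  filter_upwards [eventually_ge_atTop m] with n hn
  exact Finset.single_le_sum (f := fun m => h (u m) n) (fun _ _ => Nat.zero_le _)
    (Finset.mem_range.mpr (Nat.lt_succ_of_le hn))

/-- A family of pointwise thresholds that is bounded everywhere by one function yields equi-ideal
convergence. -/
theorem exhEqui_of_bound {φ : Set ℕ → ℝ≥0∞} (hmono : ∀ A B : Set ℕ, φ A ≤ φ (A ∪ B))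
    {f : ℕ → ℝ → ℝ} {A : Set ℝ} {k : ℝ → ℕ → ℕ} {b : ℕ → ℕ}
    (hk : ∀ x ∈ A, ∀ n : ℕ, φ ({m | 1 / ((n : ℝ) + 1) ≤ f m x} \ Set.Iio (k x n)) <
      ENNReal.ofReal (1 / ((n : ℝ) + 1)))
    (hb : ∀ x ∈ A, ∀ n, k x n ≤ b n) : ExhEqui φ f A := by
  intro δ hδ
  obtain ⟨n, hn⟩ := exists_nat_one_div_lt hδ
  refine ⟨b n, fun x hx => ?_⟩
  have hsub : {m | δ ≤ f m x} \ Set.Iio (b n) ⊆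
      {m | 1 / ((n : ℝ) + 1) ≤ f m x} \ Set.Iio (k x n) := fun m hm =>
    ⟨hn.le.trans hm.1, fun hlt => hm.2 (lt_of_lt_of_le hlt (hb x hx n))⟩
  calc φ ({m | δ ≤ f m x} \ Set.Iio (b n))
      ≤ φ ({m | 1 / ((n : ℝ) + 1) ≤ f m x} \ Set.Iio (k x n)) := by
        simpa only [union_eq_self_of_subset_left hsub] using hmono
          ({m | δ ≤ f m x} \ Set.Iio (b n))
          ({m | 1 / ((n : ℝ) + 1) ≤ f m x} \ Set.Iio (k x n))
    _ < ENNReal.ofReal (1 / ((n : ℝ) + 1)) := hk x hx n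
    _ ≤ ENNReal.ofReal δ := ENNReal.ofReal_le_ofReal hn.le

theorem stmt_8
    (hyp : ∃ N : Set ℝ, N ⊆ Set.Icc 0 1 ∧ 0 < volume N ∧
      ∀ g : ℝ → ℕ → ℕ, ∃ h : ℕ → ℕ, ∀ x ∈ N, ∀ᶠ n in atTop, g x n ≤ h n)
    (φ : Set ℕ → ℝ≥0∞) (hφ : IsLSCSubmeasure φ)
    (ε : ℝ) (hε : 0 < ε)
    (f : ℕ → ℝ → ℝ)
    (hmaps : ∀ m : ℕ, ∀ x ∈ Set.Icc (0 : ℝ) 1, f m x ∈ Set.Icc (0 : ℝ) 1)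
    (hconv : ExhPointwise φ f (Set.Icc 0 1)) :
    ∃ A ⊆ Set.Icc (0 : ℝ) 1, ENNReal.ofReal (1 - ε) ≤ volume A ∧
      ExhEqui φ f A := by
  obtain ⟨N, -, hNpos, hN⟩ := hyp
  have hk : ∀ (x : ℝ) (n : ℕ), ∃ k : ℕ, x ∈ Icc (0 : ℝ) 1 →
      φ ({m | 1 / ((n : ℝ) + 1) ≤ f m x} \ Set.Iio k) < ENNReal.ofReal (1 / ((n : ℝ) + 1)) := by
    intro x n
    by_cases hx : x ∈ Icc (0 : ℝ) 1
    · obtain ⟨k, hk⟩ := hconv _ (Nat.one_div_pos_of_nat (n := n)) x hx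
      exact ⟨k, fun _ => hk⟩
    · exact ⟨0, fun h => absurd h hx⟩
  choose k hk using hk
  let M : Set ℝ := {x | ∃ q : ℚ, x + q ∈ N}
  have hNM : N ⊆ M := fun x hx => ⟨0, by simpa using hx⟩
  have hMinv : ∀ (q : ℚ) (x : ℝ), x + q ∈ M ↔ x ∈ M := fun q x =>
    ⟨fun ⟨r, hr⟩ => ⟨q + r, by push_cast; rwa [← add_assoc]⟩,
      fun ⟨r, hr⟩ => ⟨r - q, by push_cast; rwa [add_add_sub_cancel]⟩⟩
  have hMvol : volume (M ∩ Icc 0 1) = 1 := by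
    rw [volume_inter_eq_of_rat_invariant (hNpos.trans_le (measure_mono hNM)).ne' hMinv
      measurableSet_Icc]
    simp
  choose h hh using fun q : ℚ => hN fun x => k (x - q)
  obtain ⟨H, hH⟩ := exists_eventually_ge_of_countable h
  have hdom : ∀ x ∈ M, ∀ᶠ n in atTop, k x n ≤ H n := by
    rintro x ⟨q, hq⟩
    filter_upwards [hh q _ hq, hH q] with n h₁ h₂
    rw [add_sub_cancel_right] at h₁
    exact h₁.trans h₂
  let B : ℕ → Set ℝ := fun j => {x | x ∈ M ∩ Icc 0 1 ∧ ∀ n, k x n ≤ max (H n) j}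
  have hBmono : Monotone B := fun i j hij x hx =>
    ⟨hx.1, fun n => (hx.2 n).trans (max_le_max le_rfl hij)⟩
  have hBunion : ⋃ j, B j = M ∩ Icc 0 1 := by
    refine Subset.antisymm (iUnion_subset fun j x hx => hx.1) fun x hx => ?_
    obtain ⟨n₀, hn₀⟩ := eventually_atTop.mp (hdom x hx.1)
    refine mem_iUnion.mpr ⟨∑ n ∈ Finset.range n₀, k x n, hx, fun n => ?_⟩
    rcases le_or_gt n₀ n with hn | hn
    · exact le_max_of_le_left (hn₀ n hn)
    · exact le_max_of_le_right
        (Finset.single_le_sum (fun _ _ => Nat.zero_le _) (Finset.mem_range.mpr hn))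
  have hsup : ENNReal.ofReal (1 - ε) < ⨆ j, volume (B j) := by
    rw [← hBmono.measure_iUnion, hBunion, hMvol]
    exact ENNReal.ofReal_lt_one.mpr (by linarith)
  obtain ⟨j, hj⟩ := lt_iSup_iff.mp hsup
  exact ⟨B j, fun x hx => hx.1.2, hj.le,
    exhEqui_of_bound hφ.2.1 (fun x hx n => hk x n hx.1.2) fun x hx => hx.2⟩
end

section
/- Let φ be a lower semicontinuous submeasure on ℕ and let (ε_n) be a strictly decreasing sequence of positive reals with ε_n → 0, ε_0 ≤ 1, and 2ε_0 ≤ lim_{n→∞} φ(ℕ \ [0,n)). Then for every function Ψ : [0,1] → ℕ^ℕ there exists a sequence F = ⟨f_m⟩_{m∈ℕ} of functions f_m : [0,1] → [0,1] converging to 0 I-pointwise on [0,1] (where I = Exh(φ)) such that o_φ(F)(x)(n) ≥ Ψ(x)(n) for every x ∈ [0,1] and every n ∈ ℕ, where o_φ(F)(x)(n) = min{ k ∈ ℕ : φ({m : f_m(x) ≥ ε_n} \ [0,k)) < ε_n }. -/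
open MeasureTheory Filter Set ENNReal

theorem IsLSCSubmeasure.mono {φ : Set ℕ → ℝ≥0∞} (hφ : IsLSCSubmeasure φ) {A B : Set ℕ}
    (h : A ⊆ B) : φ A ≤ φ B := by
  simpa only [Set.union_eq_self_of_subset_left h] using hφ.2.1 A B

theorem stmt_9 (φ : Set ℕ → ℝ≥0∞) (hφ : IsLSCSubmeasure φ)
    (ε : ℕ → ℝ) (hεanti : StrictAnti ε) (hεpos : ∀ n, 0 < ε n)
    (hεlim : Tendsto ε atTop (nhds 0)) (hε0 : ε 0 ≤ 1)
    (hbig : ENNReal.ofReal (2 * ε 0) ≤ ⨅ n : ℕ, φ (Set.Iio n)ᶜ) :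
    ∀ Ψ : ℝ → ℕ → ℕ, ∃ f : ℕ → ℝ → ℝ,
      (∀ m : ℕ, ∀ x ∈ Set.Icc (0 : ℝ) 1, f m x ∈ Set.Icc (0 : ℝ) 1) ∧
      ExhPointwise φ f (Set.Icc 0 1) ∧
      ∀ o : ℝ → ℕ → ℕ,
        (∀ x ∈ Set.Icc (0 : ℝ) 1, ∀ n : ℕ,
          IsLeast {k : ℕ | φ ({m | ε n ≤ f m x} \ Set.Iio k) < ENNReal.ofReal (ε n)}
            (o x n)) →
        ∀ x ∈ Set.Icc (0 : ℝ) 1, ∀ n : ℕ, Ψ x n ≤ o x n := by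
  intro Ψ
  have exists_bound : ∀ (x : ℝ) (n : ℕ), ∃ N : ℕ, n < N ∧
      ENNReal.ofReal (ε n) < φ ((Set.Iio (Ψ x n))ᶜ ∩ Set.Iio N) := by
    intro x n
    have hlt : ENNReal.ofReal (ε n) < φ (Set.Iio (Ψ x n))ᶜ := by
      refine lt_of_lt_of_le ?_ (hbig.trans (iInf_le _ (Ψ x n)))
      have h0 := hεpos 0
      have hn := hεanti.antitone (Nat.zero_le n)
      exact (ENNReal.ofReal_lt_ofReal_iff (by linarith)).2 (by linarith)
    exact ((eventually_gt_atTop n).and ((hφ.2.2.2 _).eventually_const_lt hlt)).exists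
  choose b hb_gt hb using exists_bound
  have mem_first : ∀ x m, m < b x (sInf {n | m < b x n}) := fun x m =>
    Nat.sInf_mem (s := {n | m < b x n}) ⟨m, hb_gt x m⟩
  refine ⟨fun m x => ε (sInf {n | m < b x n}), fun m x _ => ⟨(hεpos _).le,
    (hεanti.antitone (Nat.zero_le _)).trans hε0⟩, ?_, ?_⟩
  · intro δ hδ x _
    obtain ⟨p, hp⟩ := (hεlim.eventually_lt_const hδ).exists
    refine ⟨(Finset.range p).sup (b x), ?_⟩
    have hempty : {m | δ ≤ ε (sInf {n | m < b x n})} \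
        Set.Iio ((Finset.range p).sup (b x)) = ∅ := by
      refine Set.sdiff_eq_empty.2 fun m hm => ?_
      have hlt : sInf {n | m < b x n} < p := hεanti.lt_iff_gt.1 (hp.trans_le hm)
      exact (mem_first x m).trans_le (Finset.le_sup (f := b x) (Finset.mem_range.2 hlt))
    rw [hempty, hφ.1]
    exact ENNReal.ofReal_pos.2 hδ
  · intro o ho x hx n
    by_contra! hlt
    refine lt_asymm (ho x hx n).1 ((hb x n).trans_le (hφ.mono ?_))
    rintro m ⟨hm, hmb⟩
    exact ⟨hεanti.antitone (Nat.sInf_le hmb), fun hmo => hm (lt_trans hmo hlt)⟩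
end

section
/- Let C : ℕ → 𝒫(ℕ) be a nondecreasing sequence of subsets of ℕ (C_i ⊆ C_{i+1} for all i), generating the countably generated ideal I = {A ⊆ ℕ : A ⊆ C_k for some k}. Let f_n : [0,1] → [0,1] (n ∈ ℕ) be Lebesgue-measurable functions converging to 0 I-pointwise on [0,1], and let ε > 0. Then there exists a Lebesgue-measurable set B ⊆ [0,1] with m(B) ≤ ε such that f_n converges to 0 I-uniformly on [0,1] \ B. -/
open MeasureTheory Filter Set

/-- `f` converges to `0` `I`-pointwise on `A`, where `I` is the ideal
generated by the nondecreasing sequence `C`. -/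
def CgPointwise (C : ℕ → Set ℕ) (f : ℕ → ℝ → ℝ) (A : Set ℝ) : Prop :=
  ∀ δ : ℝ, 0 < δ → ∀ x ∈ A, ∃ k : ℕ, {n | δ ≤ f n x} ⊆ C k

/-- `f` converges to `0` `I`-uniformly on `A`, where `I` is the ideal
generated by the nondecreasing sequence `C`. -/
def CgUniform (C : ℕ → Set ℕ) (f : ℕ → ℝ → ℝ) (A : Set ℝ) : Prop :=
  ∀ δ : ℝ, 0 < δ → ∃ k : ℕ, ∀ x ∈ A, {n | δ ≤ f n x} ⊆ C k

/-- The points of `[0,1]` at which some index outside `C k` has value at least `δ`. -/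
def exceptionalSet (C : ℕ → Set ℕ) (f : ℕ → ℝ → ℝ) (δ : ℝ) (k : ℕ) : Set ℝ :=
  Set.Icc 0 1 ∩ ⋃ n ∈ (C k)ᶜ, {x | δ ≤ f n x}

theorem mem_exceptionalSet {C : ℕ → Set ℕ} {f : ℕ → ℝ → ℝ} {δ : ℝ} {k : ℕ} {x : ℝ} :
    x ∈ exceptionalSet C f δ k ↔ x ∈ Set.Icc (0 : ℝ) 1 ∧ ¬ {n | δ ≤ f n x} ⊆ C k := by
  simp [exceptionalSet, Set.not_subset, and_comm]

theorem measurableSet_exceptionalSet (C : ℕ → Set ℕ) {f : ℕ → ℝ → ℝ}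
    (hmeas : ∀ n, Measurable (f n)) (δ : ℝ) (k : ℕ) :
    MeasurableSet (exceptionalSet C f δ k) :=
  measurableSet_Icc.inter <| MeasurableSet.biUnion (Set.to_countable _) fun n _ =>
    measurableSet_le measurable_const (hmeas n)

theorem tendsto_volume_exceptionalSet {C : ℕ → Set ℕ} (hC : Monotone C) {f : ℕ → ℝ → ℝ}
    (hmeas : ∀ n, Measurable (f n)) (hconv : CgPointwise C f (Set.Icc 0 1))
    {δ : ℝ} (hδ : 0 < δ) :
    Tendsto (fun k => volume (exceptionalSet C f δ k)) atTop (nhds 0) := by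
  have hanti : Antitone (exceptionalSet C f δ) := fun k l hkl x hx => by
    rw [mem_exceptionalSet] at hx ⊢
    exact ⟨hx.1, fun h => hx.2 (h.trans (hC hkl))⟩
  have hempty : ⋂ k, exceptionalSet C f δ k = ∅ := by
    refine Set.eq_empty_of_forall_notMem fun x hx => ?_
    simp only [Set.mem_iInter, mem_exceptionalSet] at hx
    obtain ⟨k, hk⟩ := hconv δ hδ x (hx 0).1
    exact (hx k).2 hk
  have hfin : volume (exceptionalSet C f δ 0) ≠ ⊤ :=
    measure_ne_top_of_subset Set.inter_subset_left (by simp [Real.volume_Icc])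
  have h := tendsto_measure_iInter_atTop
    (fun k => (measurableSet_exceptionalSet C hmeas δ k).nullMeasurableSet) hanti ⟨0, hfin⟩
  rwa [hempty, measure_empty] at h

theorem stmt_11 (C : ℕ → Set ℕ) (hC : Monotone C)
    (f : ℕ → ℝ → ℝ) (hmeas : ∀ n : ℕ, Measurable (f n))
    (hmaps : ∀ n : ℕ, ∀ x ∈ Set.Icc (0 : ℝ) 1, f n x ∈ Set.Icc (0 : ℝ) 1)
    (hconv : CgPointwise C f (Set.Icc 0 1))
    (ε : ℝ) (hε : 0 < ε) :
    ∃ B ⊆ Set.Icc (0 : ℝ) 1, MeasurableSet B ∧ volume B ≤ ENNReal.ofReal ε ∧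
      CgUniform C f (Set.Icc 0 1 \ B) := by
  obtain ⟨η, hη, hsum⟩ := ENNReal.exists_pos_sum_of_countable'
    (ENNReal.ofReal_pos.2 hε).ne' ℕ
  have hk : ∀ j : ℕ, ∃ k, volume (exceptionalSet C f (1 / ((j : ℝ) + 1)) k) < η j := fun j =>
    ((tendsto_volume_exceptionalSet hC hmeas hconv Nat.one_div_pos_of_nat).eventually_lt_const
      (hη j)).exists
  choose k hk using hk
  refine ⟨⋃ j : ℕ, exceptionalSet C f (1 / ((j : ℝ) + 1)) (k j),
    Set.iUnion_subset fun _ => Set.inter_subset_left,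
    MeasurableSet.iUnion fun _ => measurableSet_exceptionalSet C hmeas _ _,
    ((measure_iUnion_le _).trans (ENNReal.tsum_le_tsum fun j => (hk j).le)).trans hsum.le, ?_⟩
  intro δ hδ
  obtain ⟨j, hj⟩ := exists_nat_one_div_lt hδ
  refine ⟨k j, fun x hx n hn => ?_⟩
  by_contra hnC
  exact hx.2 (Set.mem_iUnion.2 ⟨j, mem_exceptionalSet.2 ⟨hx.1, fun h => hnC (h (hj.le.trans hn))⟩⟩)
end

section
/- Let C : ℕ → 𝒫(ℕ) be a nondecreasing sequence of subsets of ℕ with C_{i+1} \ C_i ≠ ∅ for every i, generating the ideal I = {A ⊆ ℕ : A ⊆ C_k for some k}. Then for every function φ : [0,1] → ℕ^ℕ such that, for every x ∈ [0,1], φ(x) is strictly increasing and φ(x)(0) = 0, there exists a sequence F = ⟨f_n⟩_{n∈ℕ} of functions f_n : [0,1] → [0,1] converging to 0 I-pointwise on [0,1] such that o_C(F)(x)(n) = φ(x)(n) for every x ∈ [0,1] and every n ∈ ℕ, where o_C(F)(x)(n) = min{ k ∈ ℕ : {m : f_m(x) > 2^{-n}} ⊆ C_k }. -/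
open MeasureTheory Filter Set

open Classical in
/-- The value `2⁻¹ ^ (j - 1)`, where `j` is the first index with `m ∈ D j`, and `0` if there is no
such index. -/
noncomputable def entryHeight (D : ℕ → Set ℕ) (m : ℕ) : ℝ :=
  if h : ∃ n, m ∈ D n then 1 / 2 ^ (Nat.find h - 1) else 0

theorem entryHeight_mem_Icc (D : ℕ → Set ℕ) (m : ℕ) : entryHeight D m ∈ Icc (0 : ℝ) 1 := by
  unfold entryHeight
  split_ifs with h
  · refine ⟨by positivity, ?_⟩
    rw [div_le_one (by positivity)]
    exact one_le_pow₀ one_le_two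
  · simp

theorem lt_entryHeight_iff {D : ℕ → Set ℕ} (hD : Monotone D) (m n : ℕ) :
    1 / 2 ^ n < entryHeight D m ↔ n ≠ 0 ∧ m ∈ D n := by
  classical
  unfold entryHeight
  split_ifs with h
  · have hmem : m ∈ D n ↔ Nat.find h ≤ n :=
      ⟨fun hm => Nat.find_min' h hm, fun hle => hD hle (Nat.find_spec h)⟩
    rw [one_div_lt_one_div (by positivity) (by positivity),
      pow_lt_pow_iff_right₀ one_lt_two, hmem]
    omega
  · have hn : (0 : ℝ) ≤ 1 / 2 ^ n := by positivity
    exact ⟨fun hlt => absurd hlt hn.not_gt, fun hm => absurd ⟨n, hm.2⟩ h⟩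

theorem stmt_13 (C : ℕ → Set ℕ) (hC : Monotone C)
    (hCne : ∀ i : ℕ, (C (i + 1) \ C i).Nonempty)
    (φ : ℝ → ℕ → ℕ)
    (hφ : ∀ x ∈ Set.Icc (0 : ℝ) 1, StrictMono (φ x) ∧ φ x 0 = 0) :
    ∃ f : ℕ → ℝ → ℝ,
      (∀ n : ℕ, ∀ x ∈ Set.Icc (0 : ℝ) 1, f n x ∈ Set.Icc (0 : ℝ) 1) ∧
      CgPointwise C f (Set.Icc 0 1) ∧
      ∀ o : ℝ → ℕ → ℕ,
        (∀ x ∈ Set.Icc (0 : ℝ) 1, ∀ n : ℕ,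
          IsLeast {k : ℕ | {m : ℕ | 1 / 2 ^ n < f m x} ⊆ C k} (o x n)) →
        ∀ x ∈ Set.Icc (0 : ℝ) 1, ∀ n : ℕ, o x n = φ x n := by
  have hD : ∀ x ∈ Icc (0 : ℝ) 1, Monotone fun n => C (φ x n) :=
    fun x hx => hC.comp (hφ x hx).1.monotone
  refine ⟨fun m x => entryHeight (fun n => C (φ x n)) m,
    fun m x _ => entryHeight_mem_Icc _ m, fun δ hδ x hx => ?_, fun o ho x hx n => ?_⟩
  · obtain ⟨n, hn⟩ := exists_pow_lt_of_lt_one hδ (one_half_lt_one (α := ℝ))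
    rw [one_div_pow] at hn
    exact ⟨φ x n, fun m hm => ((lt_entryHeight_iff (hD x hx) m n).1 (hn.trans_le hm)).2⟩
  · refine (ho x hx n).unique
      ⟨fun m hm => ((lt_entryHeight_iff (hD x hx) m n).1 hm).2, fun k hk => ?_⟩
    by_contra! hlt
    have hn : n ≠ 0 := by
      rintro rfl
      rw [(hφ x hx).2] at hlt
      exact Nat.not_lt_zero k hlt
    obtain ⟨m, hm, hmk⟩ := hCne k
    exact hmk (hk ((lt_entryHeight_iff (hD x hx) m n).2 ⟨hn, hC hlt hm⟩))
end

section
/- Assume that every subset of ℝ of cardinality less than the continuum is Lebesgue-null (i.e. non(N) = 𝔠), and that there exists a set Z ⊆ ℕ^ℕ of cardinality continuum such that every meagre subset of Z has cardinality less than the continuum (a 𝔠-Lusin set). Let C : ℕ → 𝒫(ℕ) be a nondecreasing sequence of subsets of ℕ with C_{i+1} \ C_i ≠ ∅ for every i, generating the ideal I = {A ⊆ ℕ : A ⊆ C_k for some k}. Then there exist a sequence f_n : [0,1] → [0,1] converging to 0 I-pointwise on [0,1], and ε > 0, such that for every A ⊆ [0,1] with m*(A) ≥ 1 − ε, the sequence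 does not converge to 0 I-uniformly on A. -/
open MeasureTheory Filter Set

/-- Everywhere-bounded sets of functions are nowhere dense in Baire space. -/
theorem isNowhereDense_Iic_natFun (h : ℕ → ℕ) : IsNowhereDense (Iic h) := by
  rw [isClosed_Iic.isNowhereDense_iff, eq_empty_iff_forall_notMem]
  intro z hz
  have hlim : Tendsto (fun n => Function.update z n (h n + 1)) atTop (nhds z) := by
    rw [tendsto_pi_nhds]
    intro i
    refine tendsto_const_nhds.congr' ?_
    filter_upwards [eventually_gt_atTop i] with n hn
    rw [Function.update_of_ne hn.ne]
  obtain ⟨n, hn⟩ := (hlim.eventually (mem_interior_iff_mem_nhds.1 hz)).exists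
  have hle : Function.update z n (h n + 1) n ≤ h n := hn n
  simp at hle

open Classical in
/-- The value `1 / (m + 1)` for the least `m` with `p (z m) = n`, and `0` if there is none. -/
noncomputable def firstHit (p z : ℕ → ℕ) (n : ℕ) : ℝ :=
  if h : ∃ m, p (z m) = n then 1 / ((Nat.find h : ℝ) + 1) else 0

theorem firstHit_mem_Icc (p z : ℕ → ℕ) (n : ℕ) : firstHit p z n ∈ Icc (0 : ℝ) 1 := by
  classical
  unfold firstHit
  split_ifs with h
  · exact ⟨by positivity, (div_le_one (by positivity)).2 (by simp)⟩
  · simp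

theorem one_div_le_firstHit (p z : ℕ → ℕ) (m : ℕ) :
    1 / ((m : ℝ) + 1) ≤ firstHit p z (p (z m)) := by
  classical
  have h : ∃ k, p (z k) = p (z m) := ⟨m, rfl⟩
  rw [firstHit, dif_pos h]
  have hle : ((Nat.find h : ℕ) : ℝ) ≤ m := by exact_mod_cast Nat.find_min' h rfl
  gcongr

theorem exists_le_of_le_firstHit {p z : ℕ → ℕ} {n : ℕ} {δ : ℝ} (hδ : 0 < δ)
    (h : δ ≤ firstHit p z n) : ∃ m : ℕ, m ≤ ⌊1 / δ⌋₊ ∧ p (z m) = n := by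
  classical
  unfold firstHit at h
  split_ifs at h with hex
  · refine ⟨Nat.find hex, Nat.le_floor ?_, Nat.find_spec hex⟩
    have := (le_one_div hδ (by positivity)).1 h
    linarith
  · linarith

theorem stmt_14
    (hnon : ∀ s : Set ℝ, Cardinal.mk s < Cardinal.continuum → volume s = 0)
    (hLusin : ∃ Z : Set (ℕ → ℕ), Cardinal.mk Z = Cardinal.continuum ∧
      ∀ M ⊆ Z, IsMeagre M → Cardinal.mk M < Cardinal.continuum)
    (C : ℕ → Set ℕ) (hC : Monotone C)
    (hCne : ∀ i : ℕ, (C (i + 1) \ C i).Nonempty) :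
    ∃ f : ℕ → ℝ → ℝ,
      (∀ n : ℕ, ∀ x ∈ Set.Icc (0 : ℝ) 1, f n x ∈ Set.Icc (0 : ℝ) 1) ∧
      CgPointwise C f (Set.Icc 0 1) ∧
      ∃ ε : ℝ, 0 < ε ∧
        ∀ A ⊆ Set.Icc (0 : ℝ) 1, ENNReal.ofReal (1 - ε) ≤ volume A →
          ¬ CgUniform C f A := by
  obtain ⟨Z, hZ, hmeagre⟩ := hLusin
  choose p hp using hCne
  obtain ⟨e⟩ : Nonempty (ℝ ≃ Z) := Cardinal.eq.1 (Cardinal.mk_real.trans hZ.symm)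
  refine ⟨fun n x => firstHit p (e x) n, fun n x _ => firstHit_mem_Icc _ _ _, ?_,
    1 / 2, by norm_num, ?_⟩
  · intro δ hδ x _
    refine ⟨(Finset.range (⌊1 / δ⌋₊ + 1)).sup (e x : ℕ → ℕ) + 1, fun n hn => ?_⟩
    obtain ⟨m, hm, rfl⟩ := exists_le_of_le_firstHit hδ hn
    refine hC (Nat.succ_le_succ (Finset.le_sup (f := (e x : ℕ → ℕ)) ?_)) (hp _).1
    exact Finset.mem_range.2 (Nat.lt_succ_of_le hm)
  · intro A _ hA hunif
    choose h hh using fun m : ℕ => hunif (1 / ((m : ℝ) + 1)) (by positivity)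
    have hinj : Function.Injective fun x : ℝ => (e x : ℕ → ℕ) :=
      Subtype.val_injective.comp e.injective
    have hbdd : BddNatFun ((fun x : ℝ => (e x : ℕ → ℕ)) '' A) := by
      refine ⟨h, ?_⟩
      rintro _ ⟨x, hx, rfl⟩ m
      by_contra! hlt
      exact (hp _).2 (hC hlt.le (hh m x hx (one_div_le_firstHit p (e x) m)))
    have hcard := hmeagre _ (image_subset_iff.2 fun x _ => (e x).2) hbdd.isMeagre
    rw [Cardinal.mk_image_eq hinj] at hcard
    rw [hnon A hcard, nonpos_iff_eq_zero, ENNReal.ofReal_eq_zero] at hA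
    norm_num at hA
end

section
/- Let C : ℕ → 𝒫(ℕ) be a nondecreasing sequence of subsets of ℕ, each with infinite complement ℕ \ C_n, generating the ideal I = {A ⊆ ℕ : A ⊆ C_k for some k}. Let f_n : [0,1] → [0,1] (n ∈ ℕ) be Lebesgue-measurable functions converging to 0 I*-pointwise on [0,1], and let ε > 0. Then there exists a Lebesgue-measurable set B ⊆ [0,1] with m(B) ≤ ε such that f_n converges to 0 I*-uniformly on [0,1] \ B. -/
open MeasureTheory Filter Set

/-- `f` converges to `0` `I*`-pointwise on `A`, where `I` is the ideal
generated by the nondecreasing sequence `C`. -/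
def CgStarPointwise (C : ℕ → Set ℕ) (f : ℕ → ℝ → ℝ) (A : Set ℝ) : Prop :=
  ∀ x ∈ A, ∃ k : ℕ, ∃ M : Set ℕ, M.Infinite ∧ Mᶜ ⊆ C k ∧
    ∀ δ : ℝ, 0 < δ → {m : ℕ | m ∈ M ∧ δ ≤ f m x}.Finite

/-- `f` converges to `0` `I*`-uniformly on `A`, where `I` is the ideal
generated by the nondecreasing sequence `C`. -/
def CgStarUniform (C : ℕ → Set ℕ) (f : ℕ → ℝ → ℝ) (A : Set ℝ) : Prop :=
  ∃ k : ℕ, ∃ M : Set ℕ, M.Infinite ∧ Mᶜ ⊆ C k ∧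
    ∀ δ : ℝ, 0 < δ → ∃ p : ℕ, ∀ x ∈ A, ∀ m ∈ M, p ≤ m → f m x < δ

open scoped Topology

/-- If a monotone sequence of measurable sets covers a measurable set `s` of finite measure, then
some term covers `s` up to a set of arbitrarily small measure. -/
theorem exists_measure_sdiff_le_of_monotone {α : Type*} [MeasurableSpace α] {μ : Measure α}
    {s : Set α} {A : ℕ → Set α} (hs : MeasurableSet s) (hμs : μ s ≠ ⊤)
    (hA : ∀ k, MeasurableSet (A k)) (hmono : Monotone A) (hcover : s ⊆ ⋃ k, A k)
    {ε : ENNReal} (hε : 0 < ε) : ∃ k, μ (s \ A k) ≤ ε := by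
  have hlim : Tendsto (fun k => μ (s \ A k)) atTop (𝓝 (μ (⋂ k, s \ A k))) :=
    tendsto_measure_iInter_atTop (fun k => (hs.diff (hA k)).nullMeasurableSet)
      (fun _ _ hij => sdiff_subset_sdiff_right (hmono hij))
      ⟨0, measure_ne_top_of_subset sdiff_subset hμs⟩
  have hempty : ⋂ k, s \ A k = ∅ := by
    rw [← sdiff_iUnion, sdiff_eq_empty.2 hcover]
  rw [hempty, measure_empty] at hlim
  exact (hlim.eventually_le_const hε).exists

/-- Restricting a real sequence to the complement of a set `S` of indices gives a null sequence
as soon as the original one tends to `0` along a set of indices whose complement lies in `S`. -/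
theorem tendsto_indicator_compl_zero {S M : Set ℕ} {u : ℕ → ℝ} (hMS : Mᶜ ⊆ S)
    (hu : ∀ n, 0 ≤ u n) (hfin : ∀ δ : ℝ, 0 < δ → {m : ℕ | m ∈ M ∧ δ ≤ u m}.Finite) :
    Tendsto (Sᶜ.indicator u) atTop (𝓝 0) := by
  rw [Metric.tendsto_nhds]
  intro δ hδ
  have hev := (hfin δ hδ).eventually_cofinite_notMem
  rw [Nat.cofinite_eq_atTop] at hev
  filter_upwards [hev] with n hn
  by_cases hnS : n ∈ S
  · simpa [hnS] using hδ
  · have hnM : n ∈ M := by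
      by_contra h
      exact hnS (hMS h)
    have hlt : u n < δ := by
      by_contra! h
      exact hn ⟨hnM, h⟩
    simpa [hnS, abs_of_nonneg (hu n)] using hlt

theorem stmt_15 (C : ℕ → Set ℕ) (hC : Monotone C)
    (hCinf : ∀ n : ℕ, (C n)ᶜ.Infinite)
    (f : ℕ → ℝ → ℝ) (hmeas : ∀ n : ℕ, Measurable (f n))
    (hmaps : ∀ n : ℕ, ∀ x ∈ Set.Icc (0 : ℝ) 1, f n x ∈ Set.Icc (0 : ℝ) 1)
    (hconv : CgStarPointwise C f (Set.Icc 0 1))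
    (ε : ℝ) (hε : 0 < ε) :
    ∃ B ⊆ Set.Icc (0 : ℝ) 1, MeasurableSet B ∧ volume B ≤ ENNReal.ofReal ε ∧
      CgStarUniform C f (Set.Icc 0 1 \ B) := by
  set g : ℕ → ℕ → ℝ → ℝ := fun k n x => (C k)ᶜ.indicator (fun m => f m x) n with hg
  have hgmeas : ∀ k n, Measurable (g k n) := by
    intro k n
    by_cases hn : n ∈ C k
    · simp [hg, hn]
    · simpa [hg, hn] using hmeas n
  let A : ℕ → Set ℝ := fun k => {x ∈ Icc (0 : ℝ) 1 | Tendsto (fun n => g k n x) atTop (𝓝 0)}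
  have hAmeas : ∀ k, MeasurableSet (A k) := fun k =>
    measurableSet_Icc.inter (measurableSet_tendsto (𝓝 0) (hgmeas k))
  have hAmono : Monotone A := by
    rintro i j hij x ⟨hx, hlim⟩
    refine ⟨hx, squeeze_zero (fun n => ?_) (fun n => ?_) hlim⟩
    · exact indicator_nonneg (fun m _ => (hmaps m x hx).1) n
    · exact indicator_le_indicator_of_subset (compl_subset_compl.2 (hC hij))
        (fun m => (hmaps m x hx).1) n
  have hcover : Icc (0 : ℝ) 1 ⊆ ⋃ k, A k := by
    intro x hx
    obtain ⟨k, M, -, hMC, hfin⟩ := hconv x hx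
    exact mem_iUnion.2
      ⟨k, hx, tendsto_indicator_compl_zero hMC (fun n => (hmaps n x hx).1) hfin⟩
  have hIcc : volume (Icc (0 : ℝ) 1) ≠ ⊤ := measure_Icc_lt_top.ne
  obtain ⟨k, hk⟩ := exists_measure_sdiff_le_of_monotone measurableSet_Icc hIcc hAmeas hAmono
    hcover (ENNReal.ofReal_pos.2 (half_pos hε))
  have hAsub : A k ⊆ Icc 0 1 := fun x hx => hx.1
  obtain ⟨t, htA, ht, htμ, hunif⟩ := tendstoUniformlyOn_of_ae_tendsto (μ := volume)
    (fun n => (hgmeas k n).stronglyMeasurable) (stronglyMeasurable_const (b := (0 : ℝ)))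
    (hAmeas k) (measure_ne_top_of_subset hAsub hIcc)
    (Eventually.of_forall fun x hx => hx.2) (half_pos hε)
  refine ⟨(Icc 0 1 \ A k) ∪ t, union_subset sdiff_subset (htA.trans hAsub),
    (measurableSet_Icc.diff (hAmeas k)).union ht, ?_, k, (C k)ᶜ, hCinf k, (compl_compl _).subset,
    fun δ hδ => ?_⟩
  · calc volume ((Icc 0 1 \ A k) ∪ t) ≤ volume (Icc 0 1 \ A k) + volume t := measure_union_le _ _
      _ ≤ ENNReal.ofReal (ε / 2) + ENNReal.ofReal (ε / 2) := add_le_add hk htμ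
      _ = ENNReal.ofReal ε := by
        rw [← ENNReal.ofReal_add (half_pos hε).le (half_pos hε).le, add_halves]
  · obtain ⟨p, hp⟩ := eventually_atTop.1 (Metric.tendstoUniformlyOn_iff.1 hunif δ hδ)
    refine ⟨p, fun x hx m hm hpm => ?_⟩
    have hxA : x ∈ A k := by
      by_contra h
      exact hx.2 (Or.inl ⟨hx.1, h⟩)
    have hdist := hp m hpm x ⟨hxA, fun h => hx.2 (Or.inr h)⟩
    have hgf : g k m x = f m x := indicator_of_mem hm _
    rw [hgf, Real.dist_eq, zero_sub, abs_neg] at hdist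
    exact (le_abs_self _).trans_lt hdist
end

section
/- Assume there exists a set N ⊆ [0,1] of positive Lebesgue outer measure such that for every function g : N → ℕ^ℕ there exists h : ℕ → ℕ with g(x) ≤* h for all x ∈ N (i.e. non(N) < 𝔟). Let C : ℕ → 𝒫(ℕ) be a nondecreasing sequence of subsets of ℕ, each with infinite complement ℕ \ C_n, generating the ideal I = {A ⊆ ℕ : A ⊆ C_k for some k}. Let ε > 0 and let f_n : [0,1] → [0,1] be a sequence converging to 0 I*-pointwise on [0,1]. Then there exists A ⊆ [0,1] with m*(A) ≥ 1 − ε such that f_n converges to 0 I*-uniformly on A. -/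
open MeasureTheory Filter Set

/-- Every family of functions `ℕ → ℕ` indexed by `N` is eventually dominated by a single function;
equivalently, `N` has fewer points than the bounding number. -/
def EventuallyDominated (N : Set ℝ) : Prop :=
  ∀ g : ℝ → ℕ → ℕ, ∃ h : ℕ → ℕ, ∀ x ∈ N, ∀ᶠ n in atTop, g x n ≤ h n

/-- The union of all rational translates of a set of reals. -/
def rationalSaturation (N : Set ℝ) : Set ℝ :=
  {x | ∃ q : ℚ, x - q ∈ N}

lemma EventuallyDominated.rationalSaturation {N : Set ℝ} (hN : EventuallyDominated N) :
    EventuallyDominated (rationalSaturation N) := by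
  intro g
  choose H hH using fun q : ℚ ↦ hN fun x ↦ g (x + q)
  obtain ⟨e, he⟩ := exists_surjective_nat ℚ
  refine ⟨fun n ↦ (Finset.range (n + 1)).sup fun i ↦ H (e i) n, ?_⟩
  rintro x ⟨q, hq⟩
  obtain ⟨i, rfl⟩ := he q
  filter_upwards [hH (e i) _ hq, eventually_ge_atTop i] with n hn hi
  rw [sub_add_cancel] at hn
  exact hn.trans (Finset.le_sup (f := fun j ↦ H (e j) n) (Finset.mem_range.2 (by omega)))

lemma rationalSaturation_add_mem {N : Set ℝ} (q : ℚ) {x : ℝ} (hx : x ∈ rationalSaturation N) :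
    x + q ∈ rationalSaturation N := by
  obtain ⟨r, hr⟩ := hx
  refine ⟨r + q, ?_⟩
  push_cast
  rwa [add_sub_add_right_eq_sub]

lemma subset_rationalSaturation (N : Set ℝ) : N ⊆ rationalSaturation N :=
  fun x hx ↦ ⟨0, by simpa using hx⟩

/-- Some translate of a nonnull measurable set of reals meets a given nonnull measurable set in a
nonnull set. -/
lemma exists_volume_preimage_add_inter_ne_zero {s t : Set ℝ} (hs : MeasurableSet s)
    (ht : MeasurableSet t) (hs0 : volume s ≠ 0) (ht0 : volume t ≠ 0) :
    ∃ a : ℝ, volume ((fun x ↦ a + x) ⁻¹' s ∩ t) ≠ 0 := by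
  by_contra! hnull
  have hsection : ∀ᵐ a : ℝ, ∀ᵐ x : ℝ, ¬ (a + x ∈ s ∧ x ∈ t) :=
    .of_forall fun a ↦ measure_eq_zero_iff_ae_notMem.1 (hnull a)
  have hmeas : MeasurableSet {p : ℝ × ℝ | ¬ (p.1 + p.2 ∈ s ∧ p.2 ∈ t)} :=
    (((measurable_fst.add measurable_snd) hs).inter (measurable_snd ht)).compl
  rw [Measure.ae_ae_comm hmeas] at hsection
  refine ht0 (measure_eq_zero_iff_ae_notMem.2 ?_)
  filter_upwards [hsection] with x hx hxt
  refine hs0 ?_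
  rw [← measure_preimage_add_right volume x s]
  exact measure_eq_zero_iff_ae_notMem.2 (hx.mono fun a ha has ↦ ha ⟨has, hxt⟩)

lemma volume_compl_eq_zero_of_add_rat_mem {s : Set ℝ} (hs : MeasurableSet s)
    (hinv : ∀ q : ℚ, ∀ x ∈ s, x + q ∈ s) (hs0 : volume s ≠ 0) : volume sᶜ = 0 := by
  by_contra hc
  obtain ⟨a, ha⟩ := exists_volume_preimage_add_inter_ne_zero hs hs.compl hs0 hc
  have hnhds := Measure.sub_mem_nhds_zero_of_addHaar_pos volume _
    (((measurable_const_add a) hs).inter hs.compl) (pos_iff_ne_zero.2 ha)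
  obtain ⟨δ, hδ, hball⟩ := Metric.mem_nhds_iff.1 hnhds
  obtain ⟨q, hq⟩ := Rat.denseRange_cast.exists_dist_lt (-a) hδ
  have hmem : -(a + q) ∈ Metric.ball (0 : ℝ) δ := by
    rw [Real.dist_eq] at hq
    rw [mem_ball_zero_iff, Real.norm_eq_abs]
    convert hq using 2
    ring
  obtain ⟨y, hy, z, hz, hyz⟩ := hball hmem
  refine hz.2 ?_
  have := hinv q _ hy.1
  convert this using 1
  simp only at hyz
  linarith

/-- Rational-invariant nonnull sets of reals have full outer measure in every measurable set. -/
lemma volume_inter_eq_of_add_rat_mem {E S : Set ℝ} (hinv : ∀ q : ℚ, ∀ x ∈ E, x + q ∈ E)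
    (hE0 : volume E ≠ 0) (hS : MeasurableSet S) : volume (E ∩ S) = volume S := by
  refine le_antisymm (measure_mono inter_subset_right) ?_
  set K := toMeasurable volume (E ∩ S)
  have hK : MeasurableSet K := measurableSet_toMeasurable _ _
  have hEK : E ⊆ K ∪ Sᶜ := fun x hx ↦ by
    by_cases hxS : x ∈ S
    · exact .inl (subset_toMeasurable _ _ ⟨hx, hxS⟩)
    · exact .inr hxS
  set H := ⋂ q : ℚ, (fun x : ℝ ↦ x + q) ⁻¹' (K ∪ Sᶜ)
  have hEH : E ⊆ H := fun x hx ↦ mem_iInter.2 fun q ↦ hEK (hinv q x hx)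
  have hHc : volume Hᶜ = 0 := by
    refine volume_compl_eq_zero_of_add_rat_mem
      (.iInter fun q ↦ (measurable_add_const _) (hK.union hS.compl)) (fun q x hx ↦ ?_)
      fun h ↦ hE0 (measure_mono_null hEH h)
    refine mem_iInter.2 fun r ↦ ?_
    have := mem_iInter.1 hx (q + r)
    simpa [add_assoc] using this
  have hSK : volume (S \ K) = 0 := by
    have hsub : S \ K ⊆ Hᶜ := fun x hx hxH ↦ by
      have := mem_iInter.1 hxH 0
      simp only [Rat.cast_zero, add_zero, mem_preimage] at this
      exact this.elim hx.2 fun h ↦ h hx.1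
    exact measure_mono_null hsub hHc
  calc volume S ≤ volume (K ∪ S \ K) := measure_mono fun x hx ↦ by
        by_cases h : x ∈ K
        · exact .inl h
        · exact .inr ⟨hx, h⟩
    _ ≤ volume K + volume (S \ K) := measure_union_le _ _
    _ = volume (E ∩ S) := by rw [hSK, add_zero, measure_toMeasurable]

lemma CgStarPointwise.exists_forall_lt {C : ℕ → Set ℕ} {f : ℕ → ℝ → ℝ} {A : Set ℝ}
    (hf : CgStarPointwise C f A) {x : ℝ} (hx : x ∈ A) :
    ∃ k : ℕ, ∀ n : ℕ, ∃ p : ℕ, ∀ m, m ∉ C k → p ≤ m → f m x < 1 / (n + 1) := by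
  obtain ⟨k, M, -, hM, hfin⟩ := hf x hx
  refine ⟨k, fun n ↦ ?_⟩
  obtain ⟨p, hp⟩ := (hfin (1 / (n + 1)) Nat.one_div_pos_of_nat).bddAbove
  refine ⟨p + 1, fun m hm hpm ↦ ?_⟩
  by_contra! hle
  have : m ≤ p := hp ⟨by_contra fun h ↦ hm (hM h), hle⟩
  omega

/-- On an eventually dominated set, pointwise convergence is uniform on each term of a
nondecreasing sequence of sets exhausting it. -/
lemma CgStarPointwise.exists_monotone_uniform {C : ℕ → Set ℕ} {f : ℕ → ℝ → ℝ} {A : Set ℝ}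
    (hC : Monotone C) (hCinf : ∀ n : ℕ, (C n)ᶜ.Infinite) (hA : EventuallyDominated A)
    (hf : CgStarPointwise C f A) :
    ∃ F : ℕ → Set ℝ, Monotone F ∧ ⋃ j, F j = A ∧ ∀ j, CgStarUniform C f (F j) := by
  have hrate : ∀ x, ∃ k : ℕ, ∃ p : ℕ → ℕ, x ∈ A →
      ∀ n m, m ∉ C k → p n ≤ m → f m x < 1 / ((n : ℝ) + 1) := fun x ↦ by
    by_cases hx : x ∈ A
    · obtain ⟨k, hk⟩ := hf.exists_forall_lt hx
      choose p hp using hk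
      exact ⟨k, p, fun _ ↦ hp⟩
    · exact ⟨0, 0, fun h ↦ absurd h hx⟩
  choose k g hg using hrate
  obtain ⟨h, hh⟩ := hA g
  refine ⟨fun j ↦ {x | x ∈ A ∧ k x ≤ j ∧ ∀ n, j ≤ n → g x n ≤ h n}, ?_, ?_, fun j ↦ ?_⟩
  · rintro i j hij x ⟨hx, hkx, hgx⟩
    exact ⟨hx, hkx.trans hij, fun n hn ↦ hgx n (hij.trans hn)⟩
  · refine Subset.antisymm (iUnion_subset fun j x hx ↦ hx.1) fun x hx ↦ ?_
    obtain ⟨i, hi⟩ := eventually_atTop.1 (hh x hx)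
    exact mem_iUnion.2 ⟨max (k x) i, hx, le_max_left _ _,
      fun n hn ↦ hi n ((le_max_right _ _).trans hn)⟩
  · refine ⟨j, (C j)ᶜ, hCinf j, (compl_compl _).subset, fun δ hδ ↦ ?_⟩
    obtain ⟨n, hn⟩ := exists_nat_one_div_lt hδ
    refine ⟨h (max n j), ?_⟩
    rintro x ⟨hx, hkx, hgx⟩ m hm hpm
    refine (hg x hx (max n j) m (fun hmem ↦ hm (hC hkx hmem))
      ((hgx _ (le_max_right _ _)).trans hpm)).trans_le (le_trans ?_ hn.le)
    exact Nat.one_div_le_one_div (le_max_left _ _)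

theorem stmt_16
    (hyp : ∃ N : Set ℝ, N ⊆ Set.Icc 0 1 ∧ 0 < volume N ∧
      ∀ g : ℝ → ℕ → ℕ, ∃ h : ℕ → ℕ, ∀ x ∈ N, ∀ᶠ n in atTop, g x n ≤ h n)
    (C : ℕ → Set ℕ) (hC : Monotone C)
    (hCinf : ∀ n : ℕ, (C n)ᶜ.Infinite)
    (ε : ℝ) (hε : 0 < ε)
    (f : ℕ → ℝ → ℝ)
    (hmaps : ∀ n : ℕ, ∀ x ∈ Set.Icc (0 : ℝ) 1, f n x ∈ Set.Icc (0 : ℝ) 1)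
    (hconv : CgStarPointwise C f (Set.Icc 0 1)) :
    ∃ A ⊆ Set.Icc (0 : ℝ) 1, ENNReal.ofReal (1 - ε) ≤ volume A ∧
      CgStarUniform C f A := by
  obtain ⟨N, -, hN0, hN⟩ := hyp
  set E := rationalSaturation N
  have hE : EventuallyDominated E := EventuallyDominated.rationalSaturation hN
  have hE0 : volume E ≠ 0 :=
    (hN0.trans_le (measure_mono (subset_rationalSaturation N))).ne'
  have hvol : volume (E ∩ Set.Icc 0 1) = 1 := by
    rw [volume_inter_eq_of_add_rat_mem (fun q _ hx ↦ rationalSaturation_add_mem q hx) hE0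
      measurableSet_Icc]
    simp
  have hdom : EventuallyDominated (E ∩ Set.Icc 0 1) := fun g ↦
    (hE g).imp fun h hh x hx ↦ hh x hx.1
  have hpt : CgStarPointwise C f (E ∩ Set.Icc 0 1) := fun x hx ↦ hconv x hx.2
  obtain ⟨F, hFmono, hFunion, hFunif⟩ := hpt.exists_monotone_uniform hC hCinf hdom
  have hlt : ENNReal.ofReal (1 - ε) < ⨆ j, volume (F j) := by
    rw [← hFmono.measure_iUnion, hFunion, hvol, ENNReal.ofReal_lt_one]
    linarith
  obtain ⟨j, hj⟩ := lt_iSup_iff.1 hlt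
  exact ⟨F j, ((subset_iUnion F j).trans hFunion.subset).trans inter_subset_right, hj.le,
    hFunif j⟩
end

section
/- Let C : ℕ → 𝒫(ℕ) be a nondecreasing sequence of subsets of ℕ with C_{i+1} \ C_i infinite for every i, generating the ideal I = {A ⊆ ℕ : A ⊆ C_k for some k}. For a sequence F = ⟨f_n⟩ of functions f_n : [0,1] → [0,1] converging to 0 I*-pointwise on [0,1], define o*_C(F)(x) ∈ ℕ^ℕ by: o*_C(F)(x)(0) = min{ n : for every ε > 0, f_m(x) < ε for all but finitely many m ∈ ℕ \ C_n }, and for n ≥ 1, o*_C(F)(x)(n) = min{ p : f_l(x) < 2^{-n} for every l ∈ ℕ \ C_{o*_C(F)(x)(0)} with l > p }. Then for every function φ : [0,1] → ℕ^ℕ there exists a sequence F = ⟨f_n⟩ of functions f_n : [0,1] → [0,1] converging to 0 I*-pointwise on [0,1] such that o*_C(F)(x)(n) ≥ φ(x)(n) for every x ∈ [0,1] and every n ∈ ℕ. -/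
open MeasureTheory Filter Set

/-- Along any infinite set there is a null sequence in `[0, 1]` whose rate of convergence is
at least as slow as prescribed. -/
lemma exists_slow_null_sequence {S : Set ℕ} (hS : S.Infinite) (a : ℕ → ℕ) :
    ∃ g : ℕ → ℝ, (∀ l, g l ∈ Set.Icc (0 : ℝ) 1) ∧
      (∀ δ : ℝ, 0 < δ → {l : ℕ | δ ≤ g l}.Finite) ∧
      ∀ n, ∃ l ∈ S, a n ≤ l ∧ 1 / 2 ^ n ≤ g l := by
  choose L hLS hL using fun n => hS.exists_gt (a n + n)
  refine ⟨fun l => (1 / 2) ^ sInf {n | l ≤ L n}, fun l => ⟨by positivity,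
    pow_le_one₀ (by norm_num) (by norm_num)⟩, fun δ hδ => ?_, fun n => ⟨L n, hLS n, ?_, ?_⟩⟩
  · obtain ⟨N, hN⟩ := exists_pow_lt_of_lt_one hδ (by norm_num : (1 / 2 : ℝ) < 1)
    refine ((Set.finite_Iio N).biUnion fun n _ => Set.finite_Iic (L n)).subset fun l hl => ?_
    have hne : {n | l ≤ L n}.Nonempty := ⟨l, by have := hL l; simp only [Set.mem_ofPred_eq]; omega⟩
    refine Set.mem_biUnion (x := sInf {n | l ≤ L n}) ?_ (Nat.sInf_mem hne)
    by_contra h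
    have := pow_le_pow_of_le_one (by norm_num : (0 : ℝ) ≤ 1 / 2) (by norm_num) (not_lt.mp h)
    exact absurd (hl.trans this) (not_le.mpr hN)
  · have := hL n
    omega
  · rw [← one_div_pow]
    exact pow_le_pow_of_le_one (by norm_num) (by norm_num) (Nat.sInf_le (le_refl (L n)))

theorem stmt_17 (C : ℕ → Set ℕ) (hC : Monotone C)
    (hCinf : ∀ i : ℕ, (C (i + 1) \ C i).Infinite) :
    ∀ φ : ℝ → ℕ → ℕ, ∃ f : ℕ → ℝ → ℝ,
      (∀ n : ℕ, ∀ x ∈ Set.Icc (0 : ℝ) 1, f n x ∈ Set.Icc (0 : ℝ) 1) ∧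
      CgStarPointwise C f (Set.Icc 0 1) ∧
      ∀ o : ℝ → ℕ → ℕ,
        (∀ x ∈ Set.Icc (0 : ℝ) 1,
          IsLeast {n : ℕ | ∀ δ : ℝ, 0 < δ →
              {m : ℕ | m ∈ (C n)ᶜ ∧ δ ≤ f m x}.Finite} (o x 0) ∧
          ∀ n : ℕ, 1 ≤ n →
            IsLeast {p : ℕ | ∀ l : ℕ, l ∉ C (o x 0) → p < l → f l x < 1 / 2 ^ n}
              (o x n)) →
        ∀ x ∈ Set.Icc (0 : ℝ) 1, ∀ n : ℕ, φ x n ≤ o x n := by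
  classical
  intro φ
  have hCc (k : ℕ) : (C k)ᶜ.Infinite := (hCinf k).mono fun _ h => h.2
  choose g hg01 hg0 hg using fun x => exists_slow_null_sequence (hCc (φ x 0)) (φ x)
  have hfin (x : ℝ) (δ : ℝ) (hδ : 0 < δ) :
      {m : ℕ | m ∈ (C (φ x 0))ᶜ ∧ δ ≤ if m ∈ C (φ x 0) then 1 else g x m}.Finite :=
    (hg0 x δ hδ).subset fun m hm => by simpa [if_neg hm.1] using hm.2
  refine ⟨fun l x => if l ∈ C (φ x 0) then 1 else g x l, fun l x _ => ?_, fun x _ =>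
    ⟨φ x 0, (C (φ x 0))ᶜ, hCc _, (compl_compl _).subset, hfin x⟩, fun o ho x hx n => ?_⟩
  · dsimp only
    split_ifs
    · simp
    · exact hg01 x l
  obtain ⟨ho0, hon⟩ := ho x hx
  have hle : φ x 0 ≤ o x 0 := by
    by_contra! h
    refine hCinf (o x 0) ((ho0.1 1 one_pos).subset fun m hm => ⟨hm.2, ?_⟩)
    simp [hC (Nat.succ_le_of_lt h) hm.1]
  have heq : o x 0 = φ x 0 := le_antisymm (ho0.2 (hfin x)) hle
  rcases Nat.eq_zero_or_pos n with rfl | hn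
  · exact hle
  by_contra! h
  obtain ⟨l, hlC, hl, hgl⟩ := hg x n
  have := (hon n hn).1 l (heq ▸ hlC) (h.trans_le hl)
  beta_reduce at this
  rw [if_neg hlC] at this
  exact absurd this (not_lt.mpr hgl)
end
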